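/- Let n ≥ 3 and let ψ : ℝⁿ → ℝ be a smooth ℤⁿ-periodic eigenfunction of the Euclidean Laplacian with eigenvalue λ > 0 (i.e. Δψ = -λψ). There exist constants r₀ > 0 and a₁ > 0, depending only on n and on the constants K₁, K₂ below, such that: if λ^{-1/2} < r₀ and for some r ∈ [λ^{-1/2}, r₀] one has K₁ rⁿ ≤ ∫_{B_r(x)} ψ² dx ≤ K₂ rⁿ for every x ∈ ℝⁿ (with K₁, K₂ > 0 independent of x), then every nodal domain Ω of ψ satisfies in(Ω) ≥ a₁ · r^{-(n-1)(n-2)/(2n)} · λ^{-1/2-(n-1)(n-2)/(4n)}. -/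

import Mathlib

open MeasureTheory Metric Filter Real

noncomputable section

/-- `ψ : ℝⁿ → ℝ` is `ℤⁿ`-periodic: `ψ (x + v) = ψ x` for every integer vector `v`. -/
def ZnPeriodic (n : ℕ) (ψ : EuclideanSpace ℝ (Fin n) → ℝ) : Prop :=
  ∀ (x : EuclideanSpace ℝ (Fin n)) (v : Fin n → ℤ),
    ψ (show EuclideanSpace ℝ (Fin n) from WithLp.toLp 2 fun i => x i + (v i : ℝ)) = ψ x

/-- The Euclidean Laplacian `Δψ = ∑ᵢ ∂²ψ/∂xᵢ²`. -/
def lap (n : ℕ) (ψ : EuclideanSpace ℝ (Fin n) → ℝ) (x : EuclideanSpace ℝ (Fin n)) : ℝ :=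
  ∑ i : Fin n,
    fderiv ℝ (fun y => fderiv ℝ ψ y (EuclideanSpace.single i (1:ℝ))) x
      (EuclideanSpace.single i (1:ℝ))

/-- `Ω` is a nodal domain of `ψ`: a connected component of `{ψ ≠ 0}`. -/
def IsNodalDomain {n : ℕ} (ψ : EuclideanSpace ℝ (Fin n) → ℝ)
    (Ω : Set (EuclideanSpace ℝ (Fin n))) : Prop :=
  ∃ x, ψ x ≠ 0 ∧ Ω = connectedComponentIn {y | ψ y ≠ 0} x

/-- The inner radius of a set: the supremum of radii of open balls contained in it. -/
def innerRadius {n : ℕ} (Ω : Set (EuclideanSpace ℝ (Fin n))) : ℝ :=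
  sSup {ρ : ℝ | 0 < ρ ∧ ∃ c, Metric.ball c ρ ⊆ Ω}

/-- The fundamental domain `[0,1)ⁿ` of the torus `ℝⁿ/ℤⁿ`. -/
def fundDom (n : ℕ) : Set (EuclideanSpace ℝ (Fin n)) :=
  {x | ∀ i, x i ∈ Set.Ico (0:ℝ) 1}

/-- `S ⊆ ℕ` has full density: `#(S ∩ [1,N]) / N → 1`. -/
def FullDensity (S : Set ℕ) : Prop :=
  Filter.Tendsto (fun N => (Nat.card ↥(S ∩ Set.Icc 1 N) : ℝ) / N) Filter.atTop (nhds 1)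


section PartA
variable {E : Type*} [NormedAddCommGroup E] [InnerProductSpace ℝ E] [FiniteDimensional ℝ E]
  [MeasurableSpace E] [BorelSpace E]

/-- finite trigonometric sums with unit frequencies -/
def IsTrig (φ : E → ℝ) : Prop :=
  ∃ (S : Finset E) (a : E → ℂ), (∀ k ∈ S, ‖k‖ = 1) ∧
    ∀ x, (φ x : ℂ) = ∑ k ∈ S, a k * Complex.exp (Complex.I * (inner ℝ k x : ℝ))

def JJ (e : E) (ρ : ℝ) : ℝ := ∫ y in ball (0:E) ρ, Real.cos (inner ℝ e y)

def MV (e : E) (φ : E → ℝ) : Prop :=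
  Continuous φ ∧ ∀ x ρ, ∫ y in ball x ρ, φ y = JJ e ρ * φ x

theorem setInt_ball_translate {F : Type*} [NormedAddCommGroup F] [NormedSpace ℝ F] (μ : Measure E) [μ.IsAddLeftInvariant] (f : E → F) (x : E) (ρ : ℝ) :
    ∫ y in ball x ρ, f y ∂μ = ∫ y in ball 0 ρ, f (x + y) ∂μ := by
  rw [← integral_indicator measurableSet_ball, ← integral_indicator measurableSet_ball,
    ← integral_add_left_eq_self _ x]
  congr 1; ext y
  simp [Set.indicator, dist_eq_norm]

theorem integral_ball_reflect {F : Type*} [NormedAddCommGroup F] [NormedSpace ℝ F] (f : ℝ → F) (k e : E) (h : ‖k‖ = ‖e‖) (ρ : ℝ) :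
    ∫ y in ball (0:E) ρ, f (inner ℝ k y) = ∫ y in ball (0:E) ρ, f (inner ℝ e y) := by
  set L := (Submodule.span ℝ {k - e})ᗮ.reflection with hL
  have hk : L k = e := Submodule.reflection_sub h
  have := L.measurePreserving.setIntegral_preimage_emb
    L.toHomeomorph.measurableEmbedding (fun y => f (inner ℝ e y)) (ball 0 ρ)
  rw [← this]
  have h2 : L ⁻¹' ball 0 ρ = ball 0 ρ := by
    ext y; simp
  rw [h2]
  congr 1; ext y
  rw [← hk, L.inner_map_map]

theorem integrableOn_ball_of_continuous {F : Type*} [NormedAddCommGroup F] {f : E → F} (hf : Continuous f) (x : E) (ρ : ℝ) : IntegrableOn f (ball x ρ) :=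
  (hf.locallyIntegrable.integrableOn_isCompact (isCompact_closedBall x ρ)).mono_set ball_subset_closedBall

theorem IsTrig.mv {φ : E → ℝ} (h : IsTrig φ) {e : E} (he : ‖e‖ = 1) : MV e φ := by
  obtain ⟨S, a, hS, hφ⟩ := h
  have hc : Continuous φ := by
    have : φ = fun x => (∑ k ∈ S, a k * Complex.exp (Complex.I * (inner ℝ k x : ℝ))).re := by
      ext x; rw [← hφ]; simp
    rw [this]; fun_prop
  refine ⟨hc, fun x ρ => ?_⟩
  rw [setInt_ball_translate]
  have h1 : (∫ y in ball (0:E) ρ, (φ (x + y) : ℂ)) =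
      (∫ y in ball (0:E) ρ, Complex.exp (Complex.I * (inner ℝ e y : ℝ))) * φ x := by
    simp_rw [hφ]
    rw [integral_finsetSum, Finset.mul_sum]
    · refine Finset.sum_congr rfl fun k hk => ?_
      rw [← integral_ball_reflect (fun t => Complex.exp (Complex.I * (t : ℝ))) k e (by rw [hS k hk, he]),
        ← integral_mul_const]
      congr 1; ext y
      rw [inner_add_right]; push_cast; rw [mul_add, Complex.exp_add]; ring
    · intro k hk
      exact integrableOn_ball_of_continuous (by fun_prop) _ _
  have h2 := congrArg Complex.re h1
  have h3 : (∫ y in ball (0:E) ρ, (φ (x + y) : ℂ)) = ((∫ y in ball (0:E) ρ, φ (x + y) : ℝ) : ℂ) :=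
    integral_ofReal
  rw [h3, Complex.ofReal_re, Complex.mul_re] at h2
  rw [h2, Complex.ofReal_im, mul_zero, sub_zero]
  congr 1
  rw [JJ]
  have := integral_re (𝕜 := ℂ) (μ := volume.restrict (ball (0:E) ρ)) (f := fun y => Complex.exp (Complex.I * (inner ℝ e y : ℝ)))
    (integrableOn_ball_of_continuous (by fun_prop) _ _)
  simp only [RCLike.re_eq_complex_re] at this
  rw [← this]
  congr 1; ext y
  rw [mul_comm, Complex.exp_ofReal_mul_I_re]

theorem MV.sub_smul {e : E} {φ g : E → ℝ} (h : MV e φ) (hg : MV e g) (m : ℝ) :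
    MV e (fun x => φ x - m * g x) := by
  refine ⟨h.1.sub (hg.1.const_mul m |>.congr fun _ => rfl), fun x ρ => ?_⟩
  rw [integral_sub (f := φ) (g := fun x => m * g x) (integrableOn_ball_of_continuous h.1 _ _)
    (integrableOn_ball_of_continuous (by have := hg.1; fun_prop) _ _), integral_const_mul, h.2, hg.2]
  ring

theorem MV.neg {e : E} {φ : E → ℝ} (h : MV e φ) : MV e (fun x => - φ x) := by
  refine ⟨h.1.neg, fun x ρ => ?_⟩
  rw [integral_neg, h.2]; ring

theorem mv_cos {e : E} (he : ‖e‖ = 1) (p : E) : MV e (fun x => Real.cos (inner ℝ e (x - p))) := by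
  classical
  apply IsTrig.mv _ he
  have hne : e ≠ -e := by
    intro h
    have : e = 0 := by
      have h2 : (2:ℝ) • e = 0 := by rw [two_smul]; nth_rewrite 2 [h]; simp
      simpa using h2
    simp [this] at he
  refine ⟨{e, -e}, fun k => (1/2) * Complex.exp (- Complex.I * (inner ℝ k p : ℝ)), ?_, ?_⟩
  · intro k hk
    simp at hk
    rcases hk with rfl | rfl <;> simp [he]
  · intro x
    rw [Finset.sum_pair hne]
    simp only [Complex.ofReal_cos, Complex.cos, inner_sub_right, inner_neg_left]
    push_cast
    rw [mul_assoc, ← Complex.exp_add, mul_assoc, ← Complex.exp_add]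
    ring_nf

theorem JJ_bounds {e : E} (he : ‖e‖ = 1) {ρ : ℝ} (hρ : ρ ≤ 1) :
    volume.real (ball (0:E) ρ) / 2 ≤ JJ e ρ ∧ JJ e ρ ≤ volume.real (ball (0:E) ρ) := by
  have hint : IntegrableOn (fun y : E => Real.cos (inner ℝ e y)) (ball 0 ρ) :=
    integrableOn_ball_of_continuous (by fun_prop) _ _
  have hb : ∀ y ∈ ball (0:E) ρ, (1/2 : ℝ) ≤ Real.cos (inner ℝ e y) := by
    intro y hy
    have h1 : |inner ℝ e y| ≤ 1 := by
      refine (abs_real_inner_le_norm e y).trans ?_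
      rw [he, one_mul]; simp at hy; linarith
    have h2 := Real.one_sub_sq_div_two_le_cos (x := inner ℝ e y)
    have : (inner ℝ e y)^2 ≤ 1 := by rw [← sq_abs]; nlinarith [abs_nonneg (inner ℝ e y)]
    linarith
  constructor
  · have := setIntegral_mono_on (μ := volume) (s := ball (0:E) ρ) (f := fun _ => (1/2:ℝ)) (by exact integrableOn_const (measure_ball_lt_top.ne)) hint measurableSet_ball hb
    simp at this
    rw [JJ]; linarith
  · have := setIntegral_mono_on (μ := volume) (s := ball (0:E) ρ) (g := fun _ => (1:ℝ)) hint (by exact integrableOn_const (measure_ball_lt_top.ne)) measurableSet_ball (fun y _ => Real.cos_le_one _)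
    simp at this
    rw [JJ]; linarith

end PartA


section PartB
variable {V : Type*} [NormedAddCommGroup V] [InnerProductSpace ℝ V] [FiniteDimensional ℝ V]
  [MeasurableSpace V] [BorelSpace V]

def bmom (e : V) (m : ℕ) : ℝ := ∫ X in ball (0:V) 1, (inner ℝ e X) ^ m

theorem moment_real {e : V} (he : ‖e‖ = 1) (v : V) (m : ℕ) :
    ∫ X in ball (0:V) 1, (inner ℝ v X) ^ m = ‖v‖ ^ m * bmom e m := by
  rw [integral_ball_reflect (fun t => t ^ m) v (‖v‖ • e) (by simp [norm_smul, he]), bmom,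
    ← integral_const_mul]
  simp_rw [real_inner_smul_left, mul_pow]

theorem bmom_odd {e : V} (he : ‖e‖ = 1) {m : ℕ} (hm : Odd m) : bmom e m = 0 := by
  have := moment_real he (-e) m
  simp only [inner_neg_left, norm_neg, he, one_pow, one_mul, hm.neg_pow, integral_neg] at this
  rw [bmom] at *
  linarith

theorem bmom_even_nonneg (e : V) (m : ℕ) : 0 ≤ bmom e (2 * m) := by
  apply integral_nonneg
  intro X
  simp only [pow_mul]
  positivity

theorem moment_cplx {e : V} (he : ‖e‖ = 1) {v w : V} (M : ℕ) (Q : Polynomial ℂ)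
    (hQ : ∀ s : ℝ, Q.eval (s : ℂ) = ((‖v + s • w‖ ^ M * bmom e M : ℝ) : ℂ)) (z : ℂ) :
    ∫ X in ball (0:V) 1, ((inner ℝ v X : ℝ) + z * (inner ℝ w X : ℝ) : ℂ) ^ M = Q.eval z := by
  set P : Polynomial ℂ := ∑ j ∈ Finset.range (M + 1),
    Polynomial.C (∫ X in ball (0:V) 1, ((inner ℝ v X : ℝ) : ℂ) ^ j * ((inner ℝ w X : ℝ) : ℂ) ^ (M - j) * (M.choose j : ℂ)) * Polynomial.X ^ (M - j) with hP
  have hPe : ∀ z : ℂ, P.eval z = ∫ X in ball (0:V) 1, ((inner ℝ v X : ℝ) + z * (inner ℝ w X : ℝ) : ℂ) ^ M := by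
    intro z
    simp_rw [add_pow]
    rw [integral_finsetSum]
    · rw [hP, Polynomial.eval_finsetSum]
      refine Finset.sum_congr rfl fun j _ => ?_
      rw [Polynomial.eval_mul, Polynomial.eval_C, Polynomial.eval_pow, Polynomial.eval_X, ← integral_mul_const]
      congr 1; ext X; rw [mul_pow]; ring
    · intro j _
      exact integrableOn_ball_of_continuous (by fun_prop) _ _
  have hPQ : P = Q := by
    apply Polynomial.eq_of_infinite_eval_eq
    refine (Set.infinite_range_of_injective Complex.ofReal_injective).mono ?_
    rintro _ ⟨s, rfl⟩
    simp only [Set.mem_ofPred_eq]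
    rw [hPe, hQ, ← moment_real he, ← integral_complex_ofReal]
    congr 1; ext X
    rw [inner_add_left, real_inner_smul_left]; push_cast; rfl
  rw [← hPe, hPQ]

theorem moment_cplx_even {e : V} (he : ‖e‖ = 1) {v w : V} (hvw : inner ℝ v w = 0) (m : ℕ) :
    ∫ X in ball (0:V) 1, ((inner ℝ v X : ℝ) + Complex.I * (inner ℝ w X : ℝ) : ℂ) ^ (2 * m) =
      ((bmom e (2*m) * (‖v‖^2 - ‖w‖^2) ^ m : ℝ) : ℂ) := by
  rw [moment_cplx he (2*m) (Polynomial.C (bmom e (2*m) : ℂ) *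
    (Polynomial.C ((‖v‖^2 : ℝ) : ℂ) + Polynomial.C ((‖w‖^2 : ℝ) : ℂ) * Polynomial.X ^ 2) ^ m)]
  · simp; left; ring
  · intro s
    have : ‖v + s • w‖ ^ 2 = ‖v‖^2 + ‖w‖^2 * s^2 := by
      rw [norm_add_sq_real, real_inner_smul_right, hvw, norm_smul, mul_pow]; simp; ring
    rw [pow_mul, this]
    simp; ring

theorem moment_cplx_odd {e : V} (he : ‖e‖ = 1) {v w : V} (hvw : inner ℝ v w = 0) {m : ℕ} (hm : Odd m) :
    ∫ X in ball (0:V) 1, ((inner ℝ v X : ℝ) + Complex.I * (inner ℝ w X : ℝ) : ℂ) ^ m = 0 := by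
  rw [moment_cplx he m 0]
  · simp
  · intro s; rw [bmom_odd he hm]; simp

theorem exp_series {e : V} (he : ‖e‖ = 1) {v w : V} (hvw : inner ℝ v w = 0) :
    HasSum (fun m : ℕ => ((bmom e (2*m) / (2*m).factorial * (‖v‖^2 - ‖w‖^2) ^ m : ℝ) : ℂ))
      (∫ X in ball (0:V) 1, Complex.exp ((inner ℝ v X : ℝ) + Complex.I * (inner ℝ w X : ℝ))) := by
  set f : ℕ → V → ℂ := fun M X => ((inner ℝ v X : ℝ) + Complex.I * (inner ℝ w X : ℝ) : ℂ) ^ M / M.factorial with hf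
  have hcont : ∀ M, Continuous (f M) := by intro M; rw [hf]; fun_prop
  have hbd : ∀ M, ∀ X ∈ ball (0:V) 1, ‖f M X‖ ≤ (‖v‖ + ‖w‖) ^ M / M.factorial := by
    intro M X hX
    rw [hf]; simp only [norm_div, norm_pow, RCLike.norm_natCast]
    gcongr
    refine (norm_add_le _ _).trans ?_
    have hX : ‖X‖ ≤ 1 := by simp at hX; exact hX.le
    simp only [Complex.norm_real, norm_mul, Complex.norm_I, one_mul]
    gcongr
    · exact (norm_inner_le_norm v X).trans (mul_le_of_le_one_right (norm_nonneg _) hX)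
    · exact (norm_inner_le_norm w X).trans (mul_le_of_le_one_right (norm_nonneg _) hX)
  have h1 : HasSum (fun M => ∫ X in ball (0:V) 1, f M X)
      (∫ X in ball (0:V) 1, Complex.exp ((inner ℝ v X : ℝ) + Complex.I * (inner ℝ w X : ℝ))) := by
    refine hasSum_integral_of_dominated_convergence (fun M _ => (‖v‖ + ‖w‖) ^ M / M.factorial)
      (fun M => (hcont M).aestronglyMeasurable) ?_ ?_ ?_ ?_
    · intro M
      filter_upwards [ae_restrict_mem measurableSet_ball] with X hX using hbd M X hX
    · exact Eventually.of_forall fun _ => Real.summable_pow_div_factorial _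
    · exact integrableOn_const measure_ball_lt_top.ne
    · refine Eventually.of_forall fun X => ?_
      have := NormedSpace.expSeries_div_hasSum_exp (𝔸 := ℂ) ((inner ℝ v X : ℝ) + Complex.I * (inner ℝ w X : ℝ))
      rw [← Complex.exp_eq_exp_ℂ] at this
      exact this
  have hinj : Function.Injective (fun m : ℕ => 2 * m) := fun a b h => by simpa using h
  have h2 := (hinj.hasSum_iff (f := fun M => ∫ X in ball (0:V) 1, f M X) ?_).2 h1
  · convert h2 using 2 with m
    simp only [Function.comp, hf]
    rw [integral_div, moment_cplx_even he hvw]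
    push_cast; ring
  · intro M hM
    have : Odd M := by
      rw [← Nat.not_even_iff_odd]
      rintro ⟨k, hk⟩
      exact hM ⟨k, by simp; omega⟩
    simp only [hf]
    rw [integral_div, moment_cplx_odd he hvw this, zero_div]

theorem exp_series_scaled {e : V} (he : ‖e‖ = 1) {v w : V} (hvw : inner ℝ v w = 0) {ρ : ℝ} (hρ : 0 < ρ) :
    HasSum (fun m : ℕ => ((bmom e (2*m) / (2*m).factorial * (‖v‖^2 - ‖w‖^2) ^ m * ρ ^ (2*m) : ℝ) : ℂ))
      ((∫ X in ball (0:V) ρ, Complex.exp ((inner ℝ v X : ℝ) + Complex.I * (inner ℝ w X : ℝ)))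
        / ((ρ ^ Module.finrank ℝ V : ℝ) : ℂ)) := by
  have h := exp_series he (v := ρ • v) (w := ρ • w) (by simp [real_inner_smul_left, real_inner_smul_right, hvw])
  have hs := Measure.setIntegral_comp_smul_of_pos (volume : Measure V) (fun X => Complex.exp ((inner ℝ v X : ℝ) + Complex.I * (inner ℝ w X : ℝ))) (ball 0 1) hρ
  rw [_root_.smul_ball hρ.ne', smul_zero, Real.norm_of_nonneg hρ.le, mul_one] at hs
  convert h using 1
  · ext m
    congr 1
    simp only [norm_smul, mul_pow, Real.norm_of_nonneg hρ.le, ← mul_sub]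
    rw [pow_mul]; ring
  · simp_rw [real_inner_smul_left]
    simp_rw [real_inner_smul_right] at hs
    rw [hs, Complex.real_smul]
    push_cast
    rw [div_eq_inv_mul]

theorem quad_nonneg {E : Type*} [NormedAddCommGroup E] [InnerProductSpace ℝ E] [FiniteDimensional ℝ E]
    (S : Finset E) (m : ℕ) : ∀ (a : E → ℂ), ∃ r : ℝ, 0 ≤ r ∧
      ∑ k ∈ S, ∑ l ∈ S, a k * (starRingEnd ℂ) (a l) * ((2 + 2 * inner ℝ k l : ℝ) : ℂ) ^ m = (r : ℂ) := by
  induction m with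
  | zero =>
    intro a
    refine ⟨‖∑ k ∈ S, a k‖ ^ 2, by positivity, ?_⟩
    simp only [pow_zero, mul_one]
    rw [← Finset.sum_mul_sum, ← map_sum, Complex.mul_conj, Complex.normSq_eq_norm_sq]
  | succ m ih =>
    intro a
    set b := stdOrthonormalBasis ℝ E
    choose r hr0 hr using ih
    refine ⟨2 * r a + ∑ j, 2 * r (fun k => a k * (inner ℝ k (b j) : ℝ)), ?_, ?_⟩
    · have := hr0 a
      have := Finset.sum_nonneg (s := Finset.univ) (fun j _ => mul_nonneg zero_le_two (hr0 (fun k => a k * (inner ℝ k (b j) : ℝ))))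
      positivity
    · push_cast
      simp_rw [← hr]
      simp_rw [Finset.mul_sum]
      rw [Finset.sum_comm (s := Finset.univ), ← Finset.sum_add_distrib]
      refine Finset.sum_congr rfl fun k _ => ?_
      rw [Finset.sum_comm (s := Finset.univ), ← Finset.sum_add_distrib]
      refine Finset.sum_congr rfl fun l _ => ?_
      have : (inner ℝ k l : ℝ) = ∑ j, inner ℝ k (b j) * inner ℝ l (b j) := by
        rw [← b.sum_inner_mul_inner]
        refine Finset.sum_congr rfl fun j _ => ?_
        rw [real_inner_comm l]
      rw [pow_succ]
      nth_rewrite 2 [this]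
      push_cast
      simp only [map_mul, Complex.conj_ofReal]
      rw [mul_add, mul_add, Finset.mul_sum, Finset.mul_sum, Finset.mul_sum]
      congr 1
      · ring
      · refine Finset.sum_congr rfl fun j _ => ?_
        ring

theorem finite_cheb (C : ℕ → ℝ) (hC : ∀ m, 0 ≤ C m) (M : ℕ) {a b q : ℝ} (ha : 0 ≤ a) (hab : a ≤ b) (hq : 1 ≤ q) :
    (∑ m ∈ Finset.range M, C m * (q * a) ^ m) * (∑ m ∈ Finset.range M, C m * b ^ m) ≤
    (∑ m ∈ Finset.range M, C m * a ^ m) * (∑ m ∈ Finset.range M, C m * (q * b) ^ m) := by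
  rw [Finset.sum_mul_sum, Finset.sum_mul_sum, ← sub_nonneg, ← Finset.sum_sub_distrib]
  simp_rw [← Finset.sum_sub_distrib]
  set f : ℕ → ℕ → ℝ := fun i j => C i * a ^ i * (C j * (q * b) ^ j) - C i * (q * a) ^ i * (C j * b ^ j) with hf
  have h2 : 0 ≤ ∑ i ∈ Finset.range M, ∑ j ∈ Finset.range M, (f i j + f j i) := by
    refine Finset.sum_nonneg fun i _ => Finset.sum_nonneg fun j _ => ?_
    have : f i j + f j i = C i * C j * ((q ^ j - q ^ i) * (a ^ i * b ^ j - a ^ j * b ^ i)) := by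
      rw [hf]; simp only [mul_pow]; ring
    rw [this]
    have key : ∀ i j : ℕ, i ≤ j → 0 ≤ (q ^ j - q ^ i) * (a ^ i * b ^ j - a ^ j * b ^ i) := by
      intro i j hij
      apply mul_nonneg
      · exact sub_nonneg.2 (pow_le_pow_right₀ hq hij)
      · obtain ⟨d, rfl⟩ := Nat.exists_eq_add_of_le hij
        have : a ^ d ≤ b ^ d := pow_le_pow_left₀ ha hab d
        have hb : 0 ≤ b := ha.trans hab
        have : a ^ i * b ^ (i+d) - a ^ (i+d) * b ^ i = a ^ i * b ^ i * (b ^ d - a ^ d) := by ring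
        rw [this]
        have : 0 ≤ b ^ d - a ^ d := by linarith
        positivity
    refine mul_nonneg (mul_nonneg (hC i) (hC j)) ?_
    rcases le_total i j with h | h
    · exact key i j h
    · have := key j i h
      linarith
  have h3 : ∑ i ∈ Finset.range M, ∑ j ∈ Finset.range M, (f i j + f j i) = 2 * ∑ i ∈ Finset.range M, ∑ j ∈ Finset.range M, f i j := by
    simp_rw [Finset.sum_add_distrib]
    rw [Finset.sum_comm (f := fun i j => f j i)]; ring
  linarith

end PartB

section PartB2
variable {E : Type*} [NormedAddCommGroup E] [InnerProductSpace ℝ E] [FiniteDimensional ℝ E]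
  [MeasurableSpace E] [BorelSpace E]

/-- energy of the harmonic extension -/
def HH (φ : E → ℝ) (x : E) (ρ : ℝ) : ℝ :=
  ∫ X in ball (0 : WithLp 2 (E × ℝ)) ρ, φ (x + X.fst) ^ 2 * Real.exp (2 * X.snd)

theorem HH_series {φ : E → ℝ} (h : IsTrig φ) (x : E) : ∃ C : ℕ → ℝ, (∀ m, 0 ≤ C m) ∧
    ∀ ρ > 0, HasSum (fun m => C m * (ρ ^ 2) ^ m) (HH φ x ρ / ρ ^ (Module.finrank ℝ (WithLp 2 (E × ℝ)))) := by
  obtain ⟨S, a, hS, hφ⟩ := h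
  set e : WithLp 2 (E × ℝ) := WithLp.toLp 2 (0, 1) with he
  have he1 : ‖e‖ = 1 := by simp [he]
  choose r hr0 hr using fun m => quad_nonneg S m (fun k => a k * Complex.exp (Complex.I * (inner ℝ k x : ℝ)))
  refine ⟨fun m => bmom e (2*m) / (2*m).factorial * r m, fun m => ?_, fun ρ hρ => ?_⟩
  · have := bmom_even_nonneg e m
    have := hr0 m
    positivity
  · rw [← Complex.hasSum_ofReal]
    set A : E → ℂ := fun k => a k * Complex.exp (Complex.I * (inner ℝ k x : ℝ)) with hA
    set v : WithLp 2 (E × ℝ) := WithLp.toLp 2 (0, 2) with hv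
    set w : E → E → WithLp 2 (E × ℝ) := fun k l => WithLp.toLp 2 (k - l, 0) with hw
    have hvw : ∀ k l, inner ℝ v (w k l) = 0 := by intro k l; simp [hv, hw, WithLp.prod_inner_apply]
    have hnorm : ∀ k ∈ S, ∀ l ∈ S, ‖v‖^2 - ‖w k l‖^2 = 2 + 2 * inner ℝ k l := by
      intro k hk l hl
      simp only [hv, hw, WithLp.prod_norm_sq_eq_of_L2]
      simp
      rw [norm_sub_sq_real, hS k hk, hS l hl]; ring
    have hs : ∀ k l, HasSum _ _ := fun k l => (exp_series_scaled he1 (hvw k l) hρ).mul_left (A k * (starRingEnd ℂ) (A l))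
    have hss := hasSum_sum (s := S) (fun k _ => hasSum_sum (s := S) (fun l _ => hs k l))
    convert hss using 1
    · ext m
      push_cast
      rw [← hr, Finset.mul_sum, Finset.sum_mul]
      refine Finset.sum_congr rfl fun k hk => ?_
      rw [Finset.mul_sum, Finset.sum_mul]
      refine Finset.sum_congr rfl fun l hl => ?_
      have := hnorm k hk l hl
      have h2 : ((‖v‖:ℂ)^2 - (‖w k l‖:ℂ)^2) = ((2 + 2 * inner ℝ k l : ℝ) : ℂ) := by
        rw [← this]; push_cast; rfl
      rw [h2, pow_mul]
      simp only [hA]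
      ring
    · rw [Complex.ofReal_div]
      simp_rw [← mul_div_assoc, ← Finset.sum_div]
      congr 1
      rw [HH, ← integral_complex_ofReal]
      simp_rw [← integral_const_mul]
      have hfc : Continuous (fun X : WithLp 2 (E × ℝ) => X.fst) := by fun_prop
      have hsc : Continuous (fun X : WithLp 2 (E × ℝ) => X.snd) := by fun_prop
      have : ∀ k l, Continuous fun X : WithLp 2 (E × ℝ) => A k * (starRingEnd ℂ) (A l) *
            Complex.exp ((inner ℝ v X : ℝ) + Complex.I * (inner ℝ (w k l) X : ℝ)) := by
        intro k l; fun_prop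
      simp_rw [← integral_finsetSum S (fun l _ => integrableOn_ball_of_continuous (this _ l) _ _)]
      rw [← integral_finsetSum S (fun k _ => integrableOn_ball_of_continuous (continuous_finsetSum _ fun l _ => this k l) _ _)]
      congr 1; ext X
      push_cast
      have e1 : (φ (x + X.fst) : ℂ) = ∑ k ∈ S, A k * Complex.exp (Complex.I * (inner ℝ k X.fst : ℝ)) := by
        rw [hφ]
        refine Finset.sum_congr rfl fun k _ => ?_
        rw [inner_add_right]; simp only [hA]; push_cast; rw [mul_add, Complex.exp_add]; ring
      have e2 : (φ (x + X.fst) : ℂ) = ∑ k ∈ S, (starRingEnd ℂ) (A k) * Complex.exp (-Complex.I * (inner ℝ k X.fst : ℝ)) := by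
        rw [← Complex.conj_ofReal, e1, map_sum]
        refine Finset.sum_congr rfl fun k _ => ?_
        rw [map_mul, ← Complex.exp_conj, map_mul (starRingEnd ℂ) Complex.I, Complex.conj_I, Complex.conj_ofReal]
      rw [sq]
      nth_rewrite 1 [e1]
      rw [e2, Finset.sum_mul_sum, Finset.sum_mul]
      refine Finset.sum_congr rfl fun k _ => ?_
      rw [Finset.sum_mul]
      refine Finset.sum_congr rfl fun l _ => ?_
      have e3 : inner ℝ v X = 2 * X.snd := by simp [hv, WithLp.prod_inner_apply, mul_comm]
      have e4 : inner ℝ (w k l) X = inner ℝ k X.fst - inner ℝ l X.fst := by simp [hw, WithLp.prod_inner_apply, inner_sub_left]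
      rw [e3, e4, Complex.exp_add]
      push_cast
      rw [mul_sub, Complex.exp_sub, neg_mul, Complex.exp_neg]
      ring

theorem HH_mono {φ : E → ℝ} (h : IsTrig φ) (x : E) {ρ ρ' q : ℝ} (hρ : 0 < ρ) (hρ' : ρ ≤ ρ') (hq : 1 ≤ q) :
    HH φ x (q * ρ) * HH φ x ρ' ≤ HH φ x ρ * HH φ x (q * ρ') := by
  obtain ⟨C, hC, hs⟩ := HH_series h x
  have t := fun ρ hρ => (hs ρ hρ).tendsto_sum_nat
  have hρ'0 := hρ.trans_le hρ'
  have hq0 : 0 < q := by linarith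
  have := le_of_tendsto_of_tendsto' ((t (q * ρ) (by positivity)).mul (t ρ' hρ'0)) ((t ρ hρ).mul (t (q*ρ') (by positivity)))
    (fun M => by
      simp_rw [mul_pow q]
      exact finite_cheb C hC M (a := ρ^2) (b := ρ'^2) (q := q^2) (by positivity) (by gcongr) (one_le_pow₀ hq))
  set d := Module.finrank ℝ (WithLp 2 (E × ℝ))
  rw [div_mul_div_comm, div_mul_div_comm, mul_pow, mul_pow, div_le_div_iff₀ (by positivity) (by positivity)] at this
  have hpos : 0 < q ^ d * ρ ^ d * ρ' ^ d := by positivity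
  rw [show ρ ^ d * (q ^ d * ρ' ^ d) = q ^ d * ρ ^ d * ρ' ^ d by ring] at this
  exact le_of_mul_le_mul_right this hpos

theorem HH_zero {φ : E → ℝ} (h : IsTrig φ) (x : E) {ρ ρ' : ℝ} (hρ : 0 < ρ) (hρ' : 0 < ρ') (h0 : HH φ x ρ = 0) :
    HH φ x ρ' = 0 := by
  obtain ⟨C, hC, hs⟩ := HH_series h x
  have h1 := hs ρ hρ
  rw [h0, zero_div, hasSum_zero_iff_of_nonneg (fun m => by have := hC m; positivity)] at h1
  have h2 : ∀ m, C m = 0 := by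
    intro m
    have := congrFun h1 m
    simp at this
    rcases this with h | h
    · exact h
    · exact absurd h.1 hρ.ne'
  have h3 := hs ρ' hρ'
  simp only [h2, zero_mul] at h3
  have := h3.unique hasSum_zero
  rcases div_eq_zero_iff.1 this with h | h
  · exact h
  · exact absurd h (by positivity)

end PartB2


section PartC
variable {E : Type*} [NormedAddCommGroup E] [InnerProductSpace ℝ E] [FiniteDimensional ℝ E]
  [MeasurableSpace E] [BorelSpace E]

theorem HH_prod (φ : E → ℝ) (x : E) (ρ a b : ℝ) :
    ∫ X in (WithLp.ofLp : WithLp 2 (E × ℝ) → E × ℝ) ⁻¹' (ball 0 ρ ×ˢ Set.Ioo a b),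
      φ (x + X.fst) ^ 2 * Real.exp (2 * X.snd)
    = (∫ y in ball x ρ, φ y ^ 2) * ∫ t in Set.Ioo a b, Real.exp (2 * t) := by
  rw [setInt_ball_translate]
  rw [← setIntegral_prod_mul, ← Measure.volume_eq_prod]
  exact (WithLp.volume_preserving_ofLp E ℝ).setIntegral_preimage_emb
    (MeasurableEquiv.toLp 2 (E × ℝ)).symm.measurableEmbedding
    (fun Y : E × ℝ => φ (x + Y.1) ^ 2 * Real.exp (2 * Y.2)) _

theorem HH_integrableOn {φ : E → ℝ} (hφ : Continuous φ) (x : E) (s : Set (WithLp 2 (E × ℝ))) (hs : Bornology.IsBounded s) :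
    IntegrableOn (fun X : WithLp 2 (E × ℝ) => φ (x + X.fst) ^ 2 * Real.exp (2 * X.snd)) s := by
  obtain ⟨r, hr⟩ := hs.subset_ball 0
  have hfc : Continuous (fun X : WithLp 2 (E × ℝ) => X.fst) := by fun_prop
  have hsc : Continuous (fun X : WithLp 2 (E × ℝ) => X.snd) := by fun_prop
  exact (integrableOn_ball_of_continuous (by fun_prop) 0 r).mono_set hr

theorem HH_lower {φ : E → ℝ} (hφ : Continuous φ) (x : E) {ρ : ℝ} (hρ : 0 < ρ) :
    ρ * ∫ y in ball x ρ, φ y ^ 2 ≤ HH φ x (2 * ρ) := by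
  have hsub : (WithLp.ofLp : WithLp 2 (E × ℝ) → E × ℝ) ⁻¹' (ball 0 ρ ×ˢ Set.Ioo 0 ρ) ⊆ ball 0 (2*ρ) := by
    intro X hX
    simp only [Set.mem_preimage, Set.mem_prod, mem_ball_zero_iff, Set.mem_Ioo] at hX
    obtain ⟨h1, h2, h3⟩ := hX
    rw [mem_ball_zero_iff]
    have h4 : ‖X‖^2 = ‖X.fst‖^2 + ‖X.snd‖^2 := WithLp.prod_norm_sq_eq_of_L2 X
    have h5 : ‖X.snd‖ < ρ := (Real.norm_of_nonneg (show 0 ≤ X.snd from h2.le)).trans_lt h3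
    have h1 : ‖X.fst‖ < ρ := h1
    apply lt_of_pow_lt_pow_left₀ 2 (by positivity)
    rw [h4]; nlinarith [norm_nonneg X.fst, norm_nonneg X.snd]
  have h1 := setIntegral_mono_set (HH_integrableOn hφ x (ball 0 (2*ρ)) isBounded_ball)
    (Eventually.of_forall fun X => by positivity) (HasSubset.Subset.eventuallyLE hsub)
  rw [HH_prod] at h1
  refine le_trans ?_ h1
  rw [mul_comm]
  have h2 : ρ ≤ ∫ t in Set.Ioo 0 ρ, Real.exp (2 * t) := by
    have := setIntegral_mono_on (μ := volume) (s := Set.Ioo 0 ρ) (f := fun _ => (1:ℝ)) (g := fun t => Real.exp (2 * t))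
      (integrableOn_const (by simp)) ((Continuous.integrableOn_Icc (by fun_prop)).mono_set Set.Ioo_subset_Icc_self)
      measurableSet_Ioo (fun t ht => Real.one_le_exp (by have := ht.1; linarith))
    simpa [hρ.le] using this
  have : 0 ≤ ∫ y in ball x ρ, φ y ^ 2 := integral_nonneg fun _ => by positivity
  gcongr

theorem HH_upper {φ : E → ℝ} (hφ : Continuous φ) (x : E) {ρ : ℝ} (hρ : 0 < ρ) :
    HH φ x ρ ≤ (2 * ρ * Real.exp (2 * ρ)) * ∫ y in ball x ρ, φ y ^ 2 := by
  have hfst : ∀ X : WithLp 2 (E × ℝ), ‖X.fst‖ ≤ ‖X‖ ∧ ‖X.snd‖ ≤ ‖X‖ := by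
    intro X
    have h4 : ‖X‖^2 = ‖X.fst‖^2 + ‖X.snd‖^2 := WithLp.prod_norm_sq_eq_of_L2 X
    constructor <;> apply le_of_sq_le_sq _ (norm_nonneg _) <;> nlinarith [norm_nonneg X.fst, norm_nonneg X.snd]
  have hsub : ball 0 ρ ⊆ (WithLp.ofLp : WithLp 2 (E × ℝ) → E × ℝ) ⁻¹' (ball 0 ρ ×ˢ Set.Ioo (-ρ) ρ) := by
    intro X hX
    rw [mem_ball_zero_iff] at hX
    simp only [Set.mem_preimage, Set.mem_prod, mem_ball_zero_iff, Set.mem_Ioo]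
    refine ⟨(hfst X).1.trans_lt hX, ?_⟩
    rw [← abs_lt]
    exact (hfst X).2.trans_lt hX
  have hbdd : Bornology.IsBounded ((WithLp.ofLp : WithLp 2 (E × ℝ) → E × ℝ) ⁻¹' (ball 0 ρ ×ˢ Set.Ioo (-ρ) ρ)) := by
    refine isBounded_ball.subset (s := _) (t := ball 0 (2 * ρ)) ?_
    intro X hX
    simp only [Set.mem_preimage, Set.mem_prod, mem_ball_zero_iff, Set.mem_Ioo] at hX
    obtain ⟨h1, h2⟩ := hX
    rw [mem_ball_zero_iff]
    have h4 : ‖X‖^2 = ‖X.fst‖^2 + ‖X.snd‖^2 := WithLp.prod_norm_sq_eq_of_L2 X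
    have h5 : ‖X.snd‖ < ρ := abs_lt.2 h2
    have h1 : ‖X.fst‖ < ρ := h1
    apply lt_of_pow_lt_pow_left₀ 2 (by positivity)
    rw [h4]; nlinarith [norm_nonneg X.fst, norm_nonneg X.snd]
  have h1 := setIntegral_mono_set (HH_integrableOn hφ x _ hbdd)
    (Eventually.of_forall fun X => by positivity) (HasSubset.Subset.eventuallyLE hsub)
  rw [HH_prod] at h1
  refine le_trans h1 ?_
  rw [mul_comm]
  have h2 : ∫ t in Set.Ioo (-ρ) ρ, Real.exp (2 * t) ≤ 2 * ρ * Real.exp (2 * ρ) := by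
    have := setIntegral_mono_on (μ := volume) (s := Set.Ioo (-ρ) ρ) (g := fun _ => Real.exp (2*ρ)) (f := fun t => Real.exp (2 * t))
      ((Continuous.integrableOn_Icc (by fun_prop)).mono_set Set.Ioo_subset_Icc_self) (integrableOn_const (by simp)) 
      measurableSet_Ioo (fun t ht => Real.exp_le_exp.2 (by have := ht.2; linarith))
    refine this.trans ?_
    simp [hρ.le]
    apply le_of_eq; ring
  have : 0 ≤ ∫ y in ball x ρ, φ y ^ 2 := integral_nonneg fun _ => by positivity
  gcongr

theorem cover_int (E : Type*) [NormedAddCommGroup E] [InnerProductSpace ℝ E] [FiniteDimensional ℝ E]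
  [MeasurableSpace E] [BorelSpace E] (L : ℝ) : ∃ N : ℕ, ∀ (β : ℝ), 0 < β → ∀ (f : E → ℝ), Continuous f → (∀ x, 0 ≤ f x) →
    ∀ A : ℝ, (∀ x, ∫ y in ball x β, f y ≤ A) → ∀ x, ∫ y in ball x (L * β), f y ≤ N * A := by
  obtain ⟨t, ht⟩ := (isCompact_closedBall (0:E) L).elim_finite_subcover (fun c : E => ball c 1)
    (fun c => isOpen_ball) (fun y _ => Set.mem_iUnion.2 ⟨y, mem_ball_self one_pos⟩)
  refine ⟨t.card, fun β hβ f hf hf0 A hA x => ?_⟩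
  have hpt : ∀ y, (ball x (L*β)).indicator f y ≤ ∑ c ∈ t, (ball (x + β • c) β).indicator f y := by
    intro y
    have hnn : ∀ c ∈ t, 0 ≤ (ball (x + β • c) β).indicator f y := fun c _ => Set.indicator_nonneg (fun z _ => hf0 z) y
    by_cases hy : y ∈ ball x (L*β)
    · rw [Set.indicator_of_mem hy]
      have hz : β⁻¹ • (y - x) ∈ closedBall (0:E) L := by
        rw [mem_closedBall_zero_iff, norm_smul, norm_inv, Real.norm_of_nonneg hβ.le, inv_mul_le_iff₀ hβ, mul_comm]
        rw [mem_ball, dist_eq_norm] at hy; exact hy.le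
      obtain ⟨c, hc, hcz⟩ := Set.mem_iUnion₂.1 (ht hz)
      have hyc : y ∈ ball (x + β • c) β := by
        rw [mem_ball, dist_eq_norm] at hcz ⊢
        have : y - (x + β • c) = β • (β⁻¹ • (y - x) - c) := by
          rw [smul_sub, smul_smul, mul_inv_cancel₀ hβ.ne', one_smul]; abel
        rw [this, norm_smul, Real.norm_of_nonneg hβ.le]
        nlinarith
      have := Finset.single_le_sum hnn hc
      rwa [Set.indicator_of_mem hyc] at this
    · rw [Set.indicator_of_notMem hy]
      exact Finset.sum_nonneg hnn
  have hi : ∀ c r, Integrable ((ball c r).indicator f) := fun c r =>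
    (integrable_indicator_iff measurableSet_ball).2 (integrableOn_ball_of_continuous hf c r)
  have := integral_mono (hi x (L*β)) (integrable_finsetSum t (fun c _ => hi (x + β • c) β)) hpt
  rw [integral_indicator measurableSet_ball, integral_finsetSum _ (fun c _ => hi (x + β • c) β)] at this
  refine this.trans ?_
  simp_rw [integral_indicator measurableSet_ball]
  refine (Finset.sum_le_card_nsmul _ _ A fun c _ => hA _).trans ?_
  simp

theorem sq_le_avg {e : E} (he : ‖e‖ = 1) {φ : E → ℝ} (h : MV e φ) (z : E) {R : ℝ} (hR : R ≤ 1) :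
    φ z ^ 2 * (volume.real (ball (0:E) R) / 4) ≤ ∫ y in ball z R, φ y ^ 2 := by
  have hc := h.1
  have h1 : 0 ≤ ∫ y in ball z R, (φ y - φ z / 2) ^ 2 := integral_nonneg fun _ => by positivity
  have h2 : ∫ y in ball z R, (φ y - φ z / 2) ^ 2 = (∫ y in ball z R, φ y ^ 2) - φ z * (∫ y in ball z R, φ y) + (φ z)^2/4 * volume.real (ball z R) := by
    have : ∀ y, (φ y - φ z / 2) ^ 2 = φ y ^ 2 - φ z * φ y + φ z ^2/4 := fun y => by ring
    simp_rw [this]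
    rw [integral_add, integral_sub, integral_const_mul]
    · simp; ring
    · exact integrableOn_ball_of_continuous (by fun_prop) _ _
    · exact integrableOn_ball_of_continuous (by fun_prop) _ _
    · exact integrableOn_ball_of_continuous (by fun_prop) _ _
    · exact integrableOn_ball_of_continuous (by fun_prop) _ _
  rw [h.2] at h2
  have h3 := (JJ_bounds he hR).1
  have h4 : volume.real (ball z R) = volume.real (ball (0:E) R) := by
    simp [Measure.real, Measure.addHaar_ball_center]
  rw [h4] at h2
  nlinarith [sq_nonneg (φ z)]

theorem doubling (E : Type*) [NormedAddCommGroup E] [InnerProductSpace ℝ E] [FiniteDimensional ℝ E]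
  [MeasurableSpace E] [BorelSpace E] {e : E} (he : ‖e‖ = 1) (d : ℕ) {K₁ K₂ : ℝ} (hK₁ : 0 < K₁) (hK₂ : 0 < K₂) :
    ∃ C : ℝ, 0 < C ∧ ∀ (β : ℝ) (φ : E → ℝ), 1 ≤ β → IsTrig φ →
      (∀ x, K₁ * β ^ d ≤ (∫ y in ball x β, φ y ^ 2) ∧ (∫ y in ball x β, φ y ^ 2) ≤ K₂ * β ^ d) →
      ∀ (x : E) (R m : ℝ), 0 < R → R ≤ 1 → (∀ y ∈ ball x (R / 8), |φ y| ≤ m) →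
        (∀ z ∈ ball x R, φ z ^ 2 ≤ Real.exp (C * β) * m ^ 2) ∧ 0 < m := by
  obtain ⟨N, hN⟩ := cover_int E 64
  set A : ℝ := 512 * Real.exp 1 * N * K₂ / K₁ with hA
  have hA0 : 0 ≤ A := by positivity
  refine ⟨128 + A, by positivity, fun β φ hβ hφ hint x R m hR hR1 hm => ?_⟩
  have hmv := hφ.mv he
  have hc := hmv.1
  have hβ0 : 0 < β := by linarith
  have up : HH φ x (32 * (2 * β)) ≤ 128 * β * Real.exp (128 * β) * (N * (K₂ * β ^ d)) := by
    rw [show 32 * (2 * β) = 64 * β by ring]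
    refine (HH_upper hc x (by positivity)).trans ?_
    rw [show 2 * (64 * β) = 128 * β by ring]
    have := hN β hβ0 (fun y => φ y ^ 2) (by fun_prop) (fun _ => by positivity) _ (fun x => (hint x).2) x
    gcongr
  have low : β * (K₁ * β ^ d) ≤ HH φ x (2 * β) := by
    refine le_trans ?_ (HH_lower hc x hβ0)
    have := (hint x).1
    gcongr
  have small : HH φ x (R/8) ≤ (R/4) * Real.exp 1 * (m^2 * volume.real (ball (0:E) R)) := by
    refine (HH_upper hc x (by positivity)).trans ?_
    rw [show 2 * (R/8) = R/4 by ring]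
    have hb : ∫ y in ball x (R/8), φ y ^ 2 ≤ m^2 * volume.real (ball (0:E) R) := by
      have := setIntegral_mono_on (μ := volume) (s := ball x (R/8)) (f := fun y => φ y ^ 2) (g := fun _ => m^2)
        (integrableOn_ball_of_continuous (by fun_prop) _ _) (integrableOn_const measure_ball_lt_top.ne)
        measurableSet_ball (fun y hy => by
          have := hm y hy
          rw [← sq_abs]; gcongr)
      refine this.trans ?_
      rw [setIntegral_const, smul_eq_mul, mul_comm]
      have h4 : volume.real (ball x (R/8)) = volume.real (ball (0:E) (R/8)) := by
        simp [Measure.real, Measure.addHaar_ball_center]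
      rw [h4]
      exact mul_le_mul_of_nonneg_left (measureReal_mono (ball_subset_ball (by linarith)) measure_ball_lt_top.ne) (by positivity)
    have : 0 ≤ ∫ y in ball x (R/8), φ y ^ 2 := integral_nonneg fun _ => by positivity
    gcongr
    linarith
  have hmpos : 0 < m := by
    have h0 : 0 ≤ m := (abs_nonneg _).trans (hm x (mem_ball_self (by positivity)))
    rcases h0.eq_or_lt with h | h
    · exfalso
      rw [← h] at small
      have hz : HH φ x (R/8) = 0 := le_antisymm (by simpa using small) (integral_nonneg fun _ => by positivity)
      have := HH_zero hφ x (by positivity) (by positivity : 0 < 2 * β) hz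
      rw [this] at low
      have : 0 < β * (K₁ * β ^ d) := by positivity
      linarith
    · exact h
  refine ⟨fun z hz => ?_, hmpos⟩
  have mono := HH_mono hφ x (by positivity : 0 < R / 8) (by linarith : R/8 ≤ 2 * β) (by norm_num : (1:ℝ) ≤ 32)
  have big : R / 2 * (φ z ^ 2 * volume.real (ball (0:E) R)) ≤ HH φ x (32 * (R/8)) := by
    rw [show 32 * (R/8) = 2 * (2 * R) by ring]
    refine le_trans ?_ (HH_lower hc x (by positivity))
    have h1 := sq_le_avg he hmv z hR1
    have h2 := setIntegral_mono_set (μ := volume) (s := ball z R) (t := ball x (2*R)) (f := fun y => φ y ^ 2)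
      (integrableOn_ball_of_continuous (by fun_prop) _ _) (Eventually.of_forall fun X => by positivity)
      (HasSubset.Subset.eventuallyLE (ball_subset_ball' (by rw [mem_ball] at hz; linarith)))
    nlinarith
  have vpos : 0 < volume.real (ball (0:E) R) := ENNReal.toReal_pos (measure_ball_pos _ _ hR).ne' measure_ball_lt_top.ne
  have hHn : ∀ ρ, 0 ≤ HH φ x ρ := fun ρ => integral_nonneg fun _ => by positivity
  have hnn : 0 ≤ HH φ x (R/8) := integral_nonneg fun _ => by positivity
  have chain : R / 2 * (φ z ^ 2 * volume.real (ball (0:E) R)) * (β * (K₁ * β ^ d)) ≤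
      ((R/4) * Real.exp 1 * (m^2 * volume.real (ball (0:E) R))) * (128 * β * Real.exp (128 * β) * (N * (K₂ * β ^ d))) := by
    refine le_trans ?_ (mono.trans ?_)
    · exact mul_le_mul big low (by positivity) (hHn _)
    · exact mul_le_mul small up (hHn _) (by positivity)
  have hpos : 0 < R * volume.real (ball (0:E) R) * β * β ^ d * K₁ := by positivity
  have key : φ z ^ 2 ≤ A * Real.exp (128 * β) * m^2 := by
    rw [← mul_le_mul_iff_right₀ hpos, hA]
    have e1 : R * volume.real (ball (0:E) R) * β * β ^ d * K₁ * (512 * Real.exp 1 * N * K₂ / K₁ * Real.exp (128 * β) * m^2) =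
      R * volume.real (ball (0:E) R) * β * β ^ d * (512 * Real.exp 1 * N * K₂ * Real.exp (128 * β) * m^2) := by
      field_simp
    rw [e1]
    have h0 : 0 ≤ R * volume.real (ball (0:E) R) * β * β ^ d * (Real.exp 1 * N * K₂ * Real.exp (128 * β) * m^2) := by positivity
    nlinarith
  refine key.trans ?_
  gcongr
  rw [add_mul, Real.exp_add, mul_comm]
  gcongr
  have := Real.add_one_le_exp (A * β)
  nlinarith

end PartC


section PartD
variable {E : Type*} [NormedAddCommGroup E] [InnerProductSpace ℝ E] [FiniteDimensional ℝ E]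
  [MeasurableSpace E] [BorelSpace E]

def IsMx (e p : E) (φ : E → ℝ) (r M : ℝ) (x : E) : Prop :=
  dist x p = r ∧ φ x = M * Real.cos (inner ℝ e (x - p)) ∧
    ∀ y ∈ closedBall p r, φ y ≤ M * Real.cos (inner ℝ e (y - p))

theorem cos_half {e p : E} (he : ‖e‖ = 1) {x : E} (hx : dist x p ≤ 1) :
    1 / 2 ≤ Real.cos (inner ℝ e (x - p)) := by
  have h1 : |inner ℝ e (x - p)| ≤ 1 := by
    have := abs_real_inner_le_norm e (x - p)
    rw [he, one_mul, ← dist_eq_norm] at this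
    linarith
  rw [← Real.cos_abs, ← Real.cos_pi_div_three]
  apply Real.cos_le_cos_of_nonneg_of_le_pi (abs_nonneg _) (by linarith [Real.pi_pos])
  linarith [Real.pi_gt_three]

theorem exists_mx {e p : E} (he : ‖e‖ = 1) {φ : E → ℝ} (h : MV e φ) {r : ℝ} (hr : 0 < r) (hr1 : r ≤ 1) :
    ∃ M x, IsMx e p φ r M x := by
  have hc := h.1
  have hgpos : ∀ y ∈ closedBall p r, 0 < Real.cos (inner ℝ e (y - p)) := fun y hy =>
    by have := cos_half he ((mem_closedBall.1 hy).trans hr1); linarith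
  obtain ⟨x₀, hx₀, hmax⟩ := (isCompact_closedBall p r).exists_isMaxOn ⟨p, mem_closedBall_self hr.le⟩
    (f := fun y => φ y / Real.cos (inner ℝ e (y - p)))
    (ContinuousOn.div hc.continuousOn (by fun_prop) (fun y hy => (hgpos y hy).ne'))
  set M := φ x₀ / Real.cos (inner ℝ e (x₀ - p)) with hM
  have hx₀M : φ x₀ - M * Real.cos (inner ℝ e (x₀ - p)) = 0 := by
    rw [hM, div_mul_cancel₀ _ (hgpos x₀ hx₀).ne', sub_self]
  have hle : ∀ y ∈ closedBall p r, φ y ≤ M * Real.cos (inner ℝ e (y - p)) := fun y hy => by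
    have h1 : φ y / Real.cos (inner ℝ e (y - p)) ≤ M := hmax hy
    rwa [div_le_iff₀ (hgpos y hy)] at h1
  have hmv := h.sub_smul (mv_cos he p) M
  set f : E → ℝ := fun x => φ x - M * Real.cos (inner ℝ e (x - p)) with hf
  have hd : dist x₀ p ≤ r := mem_closedBall.1 hx₀
  have key : ∀ x, dist x p = r → f x = 0 → ∃ M x, IsMx e p φ r M x := fun x h1 h2 =>
    ⟨M, x, h1, by simp only [hf] at h2; linarith, hle⟩
  rcases hd.eq_or_lt with h0 | h0
  · exact key x₀ h0 hx₀M
  set d := r - dist x₀ p with hdd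
  have hd0 : 0 < d := by linarith
  have hsub : ball x₀ d ⊆ closedBall p r := (ball_subset_ball' (by linarith)).trans ball_subset_closedBall
  have hint : ∫ y in ball x₀ d, f y = 0 := by
    rw [hmv.2, show f x₀ = 0 from hx₀M, mul_zero]
  have hae : (fun y => - f y) =ᵐ[volume.restrict (ball x₀ d)] 0 := by
    rw [← setIntegral_eq_zero_iff_of_nonneg_ae]
    · rw [integral_neg, hint, neg_zero]
    · refine (ae_restrict_iff' measurableSet_ball).2 (Eventually.of_forall fun y hy => ?_)
      have := hle y (hsub hy)
      simp only [hf, Pi.zero_apply]; linarith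
    · exact integrableOn_ball_of_continuous hmv.1.neg _ _
  have heq : Set.EqOn (fun y => - f y) 0 (ball x₀ d) :=
    Measure.eqOn_open_of_ae_eq hae isOpen_ball hmv.1.neg.continuousOn continuousOn_const
  have heq2 : ∀ y ∈ closedBall x₀ d, f y = 0 := by
    rw [← closure_ball x₀ hd0.ne']
    intro y hy
    have := heq.closure hmv.1.neg continuous_const hy
    simpa using this
  by_cases hxp : x₀ = p
  · refine key (p + r • e) (by simp [norm_smul, he, abs_of_pos hr]) (heq2 _ ?_)
    rw [hxp] at hdd ⊢
    simp [norm_smul, he, abs_of_pos hr, hdd]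
  · have hn : 0 < ‖x₀ - p‖ := norm_pos_iff.2 (sub_ne_zero.2 hxp)
    refine key (x₀ + (d / ‖x₀ - p‖) • (x₀ - p)) ?_ (heq2 _ ?_)
    · rw [dist_eq_norm]
      have : x₀ + (d / ‖x₀ - p‖) • (x₀ - p) - p = (1 + d / ‖x₀ - p‖) • (x₀ - p) := by
        rw [add_smul, one_smul]; abel
      rw [this, norm_smul, Real.norm_of_nonneg (by positivity), add_mul, div_mul_cancel₀ _ hn.ne', hdd, dist_eq_norm]
      ring
    · rw [mem_closedBall, dist_eq_norm, add_sub_cancel_left, norm_smul, Real.norm_of_nonneg (by positivity), div_mul_cancel₀ _ hn.ne']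

theorem IsMx.mono {e p : E} (he : ‖e‖ = 1) {φ : E → ℝ} {r M r' M' : ℝ} {x x' : E} (h : IsMx e p φ r M x)
    (h' : IsMx e p φ r' M' x') (hr : r ≤ r') (hr1 : r' ≤ 1) : M ≤ M' := by
  have h1 := h'.2.2 x (mem_closedBall.2 (h.1.trans_le hr))
  rw [h.2.1] at h1
  have h2 := cos_half he (h.1.trans_le (hr.trans hr1))
  exact le_of_mul_le_mul_right h1 (by linarith)

theorem IsMx.grow {e p : E} (he : ‖e‖ = 1) {φ : E → ℝ} (hφ : MV e φ) {r M r' M' s : ℝ} {x x' : E} (h : IsMx e p φ r M x)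
    (h' : IsMx e p φ r' M' x') (hs : 0 < s) (hr : r + s ≤ r') (hr0 : 0 < r) (hr1 : r' ≤ 1) (hM : 0 ≤ M')
    (hsm : volume.real ({y | 0 < φ y} ∩ ball x s) ≤ volume.real (ball (0:E) s) / 16) : 4 * M ≤ M' := by
  have hc := hφ.1
  have hcos := cos_half he (h.1.trans_le (by linarith) : dist x p ≤ 1)
  have hmeas : MeasurableSet ({y | 0 < φ y} ∩ ball x s) :=
    (measurableSet_lt measurable_const hc.measurable).inter measurableSet_ball
  have hfin : volume ({y | 0 < φ y} ∩ ball x s) ≠ ⊤ :=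
    ((measure_mono Set.inter_subset_right).trans_lt measure_ball_lt_top).ne
  have hI : ∫ y in ball x s, φ y ≤ M' * volume.real ({y | 0 < φ y} ∩ ball x s) := by
    rw [← integral_indicator measurableSet_ball]
    have e1 : M' * volume.real ({y | 0 < φ y} ∩ ball x s) = ∫ y, ({y | 0 < φ y} ∩ ball x s).indicator (fun _ => M') y := by
      rw [integral_indicator hmeas, setIntegral_const, smul_eq_mul, mul_comm]
    rw [e1]
    apply integral_mono
    · exact (integrable_indicator_iff measurableSet_ball).2 (integrableOn_ball_of_continuous hc _ _)
    · exact (integrable_indicator_iff hmeas).2 (integrableOn_const hfin)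
    · intro y
      by_cases hy : y ∈ ball x s
      · rw [Set.indicator_of_mem hy]
        by_cases hp : 0 < φ y
        · rw [Set.indicator_of_mem (show y ∈ {y | 0 < φ y} ∩ ball x s from ⟨hp, hy⟩)]
          have hyr : dist y p ≤ r' := by
            have := dist_triangle y x p
            rw [mem_ball] at hy
            rw [h.1] at this; linarith
          have h1 := h'.2.2 y hyr
          have h2 := Real.cos_le_one (inner ℝ e (y - p))
          nlinarith
        · rw [Set.indicator_of_notMem (fun hh => hp hh.1)]
          linarith
      · rw [Set.indicator_of_notMem hy, Set.indicator_of_notMem (fun hh => hy hh.2)]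
  rw [hφ.2] at hI
  have hJ := (JJ_bounds he (by linarith : s ≤ 1)).1
  have vpos : 0 < volume.real (ball (0:E) s) := ENNReal.toReal_pos (measure_ball_pos _ _ hs).ne' measure_ball_lt_top.ne
  by_cases hM0 : M ≤ 0
  · linarith
  push Not at hM0
  have hφx : M / 2 ≤ φ x := by rw [h.2.1]; nlinarith
  have h3 : volume.real (ball (0:E) s) * (M / 4) ≤ M' * (volume.real (ball (0:E) s) / 16) := by
    calc _ = volume.real (ball (0:E) s) / 2 * (M / 2) := by ring
      _ ≤ JJ e s * φ x := mul_le_mul hJ hφx (by linarith) (by linarith)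
      _ ≤ _ := hI
      _ ≤ _ := by gcongr
  have : volume.real (ball (0:E) s) * (4 * M) ≤ volume.real (ball (0:E) s) * M' := by linarith
  exact le_of_mul_le_mul_left this vpos

theorem vol_ball_scale {s : ℝ} (R : ℝ) (h : 0 < s) : volume.real (ball (0:E) (s * R)) = s ^ Module.finrank ℝ E * volume.real (ball (0:E) R) := by
  have := Measure.addHaar_ball_mul_of_pos (volume : Measure E) (0:E) h R
  rw [Measure.real, this, ENNReal.toReal_mul, ENNReal.toReal_ofReal (by positivity), Measure.real]

theorem asym_core {e : E} (he : ‖e‖ = 1) {φ : E → ℝ} (hφ : MV e φ) {p : E} {R : ℝ} (hR : 0 < R) (hR1 : R ≤ 1 / 2) {T : ℕ} (hT : 0 < T)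
    (hV : volume.real ({y | 0 < φ y} ∩ ball p R) < T / 32 * volume.real (ball (0:E) (R / (4 * T)))) {M₀ : ℝ} {x₀ : E} (h0 : IsMx e p φ (R/2) M₀ x₀)
    (hM₀ : 0 ≤ M₀) {M₁ : ℝ} {x₁ : E} (h1 : IsMx e p φ R M₁ x₁) : 2 ^ T * M₀ ≤ M₁ := by
  classical
  have hT' : (0:ℝ) < T := by exact_mod_cast hT
  have hc := hφ.1
  set s := R / (4 * T) with hs
  have hs0 : 0 < s := by positivity
  have hsT : T * (2 * s) = R / 2 := by rw [hs]; field_simp; ring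
  have hex : ∀ i : ℕ, ∃ M x, i ≤ T → IsMx e p φ (R/2 + i * (2 * s)) M x := by
    intro i
    by_cases hi : i ≤ T
    · have hi' : (i:ℝ) ≤ T := by exact_mod_cast hi
      have : (i:ℝ) * (2 * s) ≤ T * (2*s) := by gcongr
      obtain ⟨M, x, h⟩ := exists_mx (p := p) he hφ (r := R/2 + i * (2 * s)) (by positivity) (by linarith)
      exact ⟨M, x, fun _ => h⟩
    · exact ⟨0, 0, fun h => absurd h hi⟩
  choose M x hM using hex
  have hrad : ∀ i : ℕ, i ≤ T → R/2 + i * (2*s) ≤ R := fun i hi => by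
    have hi' : (i:ℝ) ≤ T := by exact_mod_cast hi
    have : (i:ℝ) * (2 * s) ≤ T * (2*s) := by gcongr
    linarith
  have hMpos : ∀ i ≤ T, 0 ≤ M i := fun i hi => hM₀.trans (h0.mono he (hM i hi) (le_add_of_nonneg_right (by positivity)) (by linarith [hrad i hi]))
  set b := volume.real (ball (0:E) s) / 16 with hb
  have hbpos : 0 < b := by
    have : 0 < volume.real (ball (0:E) s) := ENNReal.toReal_pos (measure_ball_pos _ _ hs0).ne' measure_ball_lt_top.ne
    positivity
  let F : ℕ → Set E := fun i => {y | 0 < φ y} ∩ ball (x i) s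
  have hmeas : ∀ i, MeasurableSet (F i) := fun i =>
    (measurableSet_lt measurable_const hc.measurable).inter measurableSet_ball
  have hdx : ∀ i ≤ T, dist (x i) p = R/2 + i * (2*s) := fun i hi => (hM i hi).1
  have hdisj : Set.PairwiseDisjoint (↑(Finset.range T)) F := by
    have aux : ∀ i j : ℕ, i < T → j < T → i < j → Disjoint (F i) (F j) := by
      intro i j hi hj hij
      refine Disjoint.mono Set.inter_subset_right Set.inter_subset_right ?_
      apply ball_disjoint_ball
      have h1 := dist_triangle (x j) (x i) p
      rw [hdx i hi.le, hdx j hj.le] at h1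
      have : (i:ℝ) + 1 ≤ j := by exact_mod_cast hij
      rw [dist_comm]
      nlinarith
    intro i hi j hj hij
    simp only [Finset.coe_range, Set.mem_Iio] at hi hj
    rcases lt_or_gt_of_ne hij with h | h
    · exact aux i j hi hj h
    · exact (aux j i hj hi h).symm
  have hsum : ∑ i ∈ Finset.range T, volume.real (F i) ≤ volume.real ({y | 0 < φ y} ∩ ball p R) := by
    rw [← measureReal_biUnion_finset hdisj (fun i _ => hmeas i) (fun i _ => ((measure_mono Set.inter_subset_right).trans_lt measure_ball_lt_top).ne)]
    apply measureReal_mono _ ((measure_mono Set.inter_subset_right).trans_lt measure_ball_lt_top).ne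
    refine Set.iUnion₂_subset fun i hi => Set.inter_subset_inter_right _ ?_
    have hi := Finset.mem_range.1 hi
    apply ball_subset_ball'
    rw [hdx i hi.le]
    have := hrad (i+1) hi
    push_cast at this
    nlinarith
  set G := (Finset.range T).filter (fun i => volume.real (F i) ≤ b) with hG
  set B := (Finset.range T).filter (fun i => ¬ volume.real (F i) ≤ b) with hB
  have hcard : G.card + B.card = T := by
    rw [hG, hB, Finset.card_filter_add_card_filter_not, Finset.card_range]
  have hBb : (B.card : ℝ) * b ≤ ∑ i ∈ Finset.range T, volume.real (F i) := by
    calc (B.card : ℝ) * b = ∑ i ∈ B, b := by simp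
      _ ≤ ∑ i ∈ B, volume.real (F i) := Finset.sum_le_sum fun i hi => (not_le.1 (Finset.mem_filter.1 hi).2).le
      _ ≤ _ := Finset.sum_le_sum_of_subset_of_nonneg (Finset.filter_subset _ _) fun _ _ _ => measureReal_nonneg
  have hBT : (2 * B.card : ℝ) < T := by
    have : (B.card : ℝ) * b < T / 2 * b := by
      refine (hBb.trans hsum).trans_lt (hV.trans_eq ?_)
      rw [hb]; ring
    have := lt_of_mul_lt_mul_right this hbpos.le
    linarith
  have hBT' : 2 * B.card < T := by exact_mod_cast hBT
  have hind : ∀ k ≤ T, (∏ i ∈ Finset.range k, (if volume.real (F i) ≤ b then (4:ℝ) else 1)) * M 0 ≤ M k := by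
    intro k
    induction k with
    | zero => simp
    | succ k ih =>
      intro hk
      have hk' : k ≤ T := by omega
      have ih := ih hk'
      rw [Finset.prod_range_succ]
      have hr1 : R/2 + ((k+1 : ℕ):ℝ) * (2*s) ≤ 1 := by linarith [hrad (k+1) hk]
      have hr2 : R/2 + (k:ℝ) * (2*s) + s ≤ R/2 + ((k+1 : ℕ):ℝ) * (2*s) := by push_cast; linarith
      split_ifs with hg
      · have := (hM k hk').grow he hφ (hM (k+1) hk) hs0 hr2 (by positivity) hr1 (hMpos _ hk) hg
        linarith
      · have := (hM k hk').mono he (hM (k+1) hk) (by linarith) hr1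
        linarith
  have hfin := hind T le_rfl
  rw [Finset.prod_ite] at hfin
  simp only [Finset.prod_const, one_pow, mul_one] at hfin
  have hMT : M T ≤ M₁ := (hM T le_rfl).mono he h1 (hrad T le_rfl) (by linarith)
  have hM0 : M₀ ≤ M 0 := h0.mono he (hM 0 (by omega)) (by simp) (by have := hrad 0 (by omega); linarith)
  have h24 : (2:ℝ) ^ T ≤ 4 ^ G.card := by
    rw [show (4:ℝ) = 2 ^ 2 by norm_num, ← pow_mul]
    exact pow_le_pow_right₀ (by norm_num) (by omega)
  calc 2 ^ T * M₀ ≤ 4 ^ G.card * M 0 := by gcongr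
    _ ≤ M T := hfin
    _ ≤ M₁ := hMT

theorem asymmetry (E : Type*) [NormedAddCommGroup E] [InnerProductSpace ℝ E] [FiniteDimensional ℝ E]
  [MeasurableSpace E] [BorelSpace E] {e : E} (he : ‖e‖ = 1) (d : ℕ) {K₁ K₂ : ℝ} (hK₁ : 0 < K₁) (hK₂ : 0 < K₂) :
    ∃ c : ℝ, 0 < c ∧ ∀ (β : ℝ) (φ : E → ℝ), 1 ≤ β → IsTrig φ →
      (∀ x, K₁ * β ^ d ≤ (∫ y in ball x β, φ y ^ 2) ∧ (∫ y in ball x β, φ y ^ 2) ≤ K₂ * β ^ d) →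
      ∀ (p : E) (R : ℝ), 0 < R → R ≤ 1 / 2 → φ p = 0 →
        c * volume.real (ball (0:E) R) ≤ volume.real ({y | 0 < φ y} ∩ ball p R) * β ^ (Module.finrank ℝ E - 1) := by
  obtain ⟨C, hC, hdoub⟩ := doubling E he d hK₁ hK₂
  set n := Module.finrank ℝ E with hn
  have hn1 : 1 ≤ n := by
    have : Nontrivial E := ⟨e, 0, fun h => by simp [h] at he⟩
    exact Module.finrank_pos
  set C' : ℝ := n + 2 + C + 1 with hC'
  refine ⟨1 / (32 * 4 ^ n * (C' + 1) ^ (n - 1)), by positivity, fun β φ hβ hφ hint p R hR hR1 hp => ?_⟩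
  have hmv := hφ.mv he
  have hc := hmv.1
  have hβ0 : 0 < β := by linarith
  set T := ⌈C' * β⌉₊ with hT
  have hT1 : C' * β ≤ T := Nat.le_ceil _
  have hC'0 : 0 < C' := by positivity
  have hT2 : (T:ℝ) ≤ (C' + 1) * β := by
    have := Nat.ceil_lt_add_one (by positivity : 0 ≤ C' * β)
    nlinarith
  have hT0 : 0 < T := by
    have : (0:ℝ) < T := lt_of_lt_of_le (by positivity) hT1
    exact_mod_cast this
  have hT0' : (0:ℝ) < T := by exact_mod_cast hT0
  have vs : volume.real (ball (0:E) (R / (4 * T))) = (1 / (4 * T)) ^ n * volume.real (ball (0:E) R) := by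
    rw [show R / (4 * T) = (1 / (4 * T)) * R by ring, vol_ball_scale R (by positivity)]
  suffices hV : T / 32 * volume.real (ball (0:E) (R / (4 * T))) ≤ volume.real ({y | 0 < φ y} ∩ ball p R) by
    have vpos : 0 < volume.real (ball (0:E) R) := ENNReal.toReal_pos (measure_ball_pos _ _ hR).ne' measure_ball_lt_top.ne
    refine le_trans ?_ (mul_le_mul_of_nonneg_right hV (by positivity))
    rw [vs]
    have e1 : (T:ℝ) / 32 * ((1 / (4 * T)) ^ n * volume.real (ball (0:E) R)) * β ^ (n-1) = 
        1 / (32 * 4 ^ n * (T:ℝ) ^ (n-1)) * volume.real (ball (0:E) R) * β ^ (n-1) := by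
      obtain ⟨k, hk⟩ := Nat.exists_eq_add_of_le hn1
      rw [hk, Nat.add_sub_cancel_left, pow_add, pow_add, div_pow (1:ℝ) (4 * T) k, mul_pow (4:ℝ) T k, one_pow k]
      field_simp
    have e2 : (T:ℝ)^(n-1) ≤ ((C'+1)*β)^(n-1) := by gcongr
    rw [mul_pow] at e2
    rw [e1]
    have e3 : 1 / (32 * 4 ^ n * (C' + 1) ^ (n - 1)) = 1 / (32 * 4 ^ n * ((C' + 1) ^ (n - 1) * β^(n-1))) * β ^ (n-1) := by
      field_simp
    rw [e3, mul_right_comm]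
    gcongr
  by_contra hV
  push Not at hV
  obtain ⟨M₀, x₀, h0⟩ := exists_mx (p := p) he hmv (r := R/2) (by positivity) (by linarith)
  obtain ⟨M₁, x₁, h1⟩ := exists_mx (p := p) he hmv (r := R) (by positivity) (by linarith)
  have hM0 : 0 ≤ M₀ := by
    have := h0.2.2 p (mem_closedBall_self (by positivity))
    simpa [hp] using this
  have hgrow := asym_core he hmv hR hR1 hT0 hV h0 hM0 h1
  have hle : ∀ y ∈ closedBall p (R/2), φ y ≤ M₀ := fun y hy => by
    have h3 := h0.2.2 y hy
    have h4 := Real.cos_le_one (inner ℝ e (y - p))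
    nlinarith
  have hbd : ∀ y ∈ ball p (2 * R / 8), |φ y| ≤ 2 ^ (n+1) * M₀ := by
    intro y hy
    rw [show 2 * R / 8 = R / 4 by ring] at hy
    rw [mem_ball] at hy
    have hsub : ball y (R/4) ⊆ ball p (R/2) := ball_subset_ball' (by linarith)
    have k1 : ∫ z in ball y (R/4), (M₀ - φ z) ≤ ∫ z in ball p (R/2), (M₀ - φ z) := by
      refine setIntegral_mono_set (integrableOn_ball_of_continuous (by fun_prop) _ _) ?_ (LE.le.eventuallyLE hsub)
      refine (ae_restrict_iff' measurableSet_ball).2 (Eventually.of_forall fun z hz => ?_)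
      have := hle z (ball_subset_closedBall hz)
      simpa using this
    have h4 : ∀ (z : E) (r : ℝ), volume.real (ball z r) = volume.real (ball (0:E) r) := fun z r => by
      simp [Measure.real, Measure.addHaar_ball_center]
    have k2 : ∀ (z : E) (r : ℝ), ∫ z in ball z r, (M₀ - φ z) = volume.real (ball (0:E) r) * M₀ - JJ e r * φ z := fun z r => by
      rw [integral_sub (integrableOn_ball_of_continuous (by fun_prop) _ _) (integrableOn_ball_of_continuous (by fun_prop) _ _), hmv.2]
      simp [h4]
    rw [k2, k2, hp, mul_zero, sub_zero, show R/2 = 2 * (R/4) by ring, vol_ball_scale (R/4) (by norm_num)] at k1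
    have hJ := (JJ_bounds he (by linarith : R/4 ≤ 1)).1
    have vpos : 0 < volume.real (ball (0:E) (R/4)) := ENNReal.toReal_pos (measure_ball_pos _ _ (by positivity)).ne' measure_ball_lt_top.ne
    have h2n : (1:ℝ) ≤ 2 ^ n := one_le_pow₀ (by norm_num)
    rw [abs_le]
    constructor
    · rw [pow_succ]
      by_cases hy0 : 0 ≤ φ y
      · have : 0 ≤ 2 ^ n * 2 * M₀ := by positivity
        linarith
      push Not at hy0
      have : volume.real (ball (0:E) (R/4)) * (- φ y) ≤ volume.real (ball (0:E) (R/4)) * (2 ^ n * 2 * M₀) := by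
        have := mul_le_mul_of_nonneg_right hJ (by linarith : 0 ≤ - φ y)
        have : 0 ≤ volume.real (ball (0:E) (R/4)) * M₀ := by positivity
        nlinarith
      have := le_of_mul_le_mul_left this vpos
      linarith
    · have := hle y (mem_closedBall.2 (by linarith))
      have h5 : (1:ℝ) ≤ 2 ^ (n+1) := one_le_pow₀ (by norm_num)
      nlinarith
  obtain ⟨hup, hmpos⟩ := hdoub β φ hβ hφ hint p (2*R) _ (by positivity) (by linarith) hbd
  have hM0' : 0 < M₀ := by
    rcases hM0.eq_or_lt with h | h
    · rw [← h] at hmpos; simp at hmpos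
    · exact h
  have hx1 := hup x₁ (by rw [mem_ball, h1.1]; linarith)
  have hcos := cos_half he (h1.1.trans_le (by linarith) : dist x₁ p ≤ 1)
  have hM1 : 0 ≤ M₁ := le_trans (by positivity) hgrow
  have hM1s : M₁ ^ 2 / 4 ≤ φ x₁ ^ 2 := by
    rw [h1.2.1, mul_pow]
    have : (1/2:ℝ)^2 ≤ Real.cos (inner ℝ e (x₁ - p)) ^ 2 := by gcongr
    nlinarith [sq_nonneg M₁]
  have hfin : (2 ^ T * M₀)^2 ≤ 4 * (Real.exp (C * β) * (2 ^ (n+1) * M₀)^2) := by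
    have : (2 ^ T * M₀)^2 ≤ M₁ ^2 := by gcongr
    linarith
  have hfin2 : (4:ℝ) ^ T ≤ 4 ^ (n+2) * Real.exp (C * β) := by
    have : M₀ ^ 2 * (4:ℝ) ^ T ≤ M₀ ^ 2 * (4 ^ (n+2) * Real.exp (C * β)) := by
      rw [show (4:ℝ) = 2^2 by norm_num, ← pow_mul, ← pow_mul, mul_comm 2 T, mul_comm 2 (n+2), pow_mul, pow_mul]
      rw [mul_pow, mul_pow] at hfin
      calc _ = (2 ^ T) ^ 2 * M₀ ^ 2 := by ring
        _ ≤ _ := hfin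
        _ = _ := by ring
    exact le_of_mul_le_mul_left this (by positivity)
  have hlog : 1 < Real.log 4 := by
    rw [Real.lt_log_iff_exp_lt (by norm_num)]
    linarith [Real.exp_one_lt_d9]
  have hfin3 := Real.log_le_log (by positivity) hfin2
  rw [Real.log_mul (by positivity) (by positivity), Real.log_exp, Real.log_pow, Real.log_pow] at hfin3
  push_cast at hfin3
  have h7 : (n:ℝ) + 2 + C * β + 1 ≤ T := by
    refine le_trans ?_ hT1
    rw [hC']
    have : (0:ℝ) ≤ n := by positivity
    nlinarith
  have h8 : 0 < C * β := by positivity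
  nlinarith

end PartD


section PartE
open scoped ENNReal NNReal
variable {E : Type*} [NormedAddCommGroup E] [InnerProductSpace ℝ E] [FiniteDimensional ℝ E]
  [MeasurableSpace E] [BorelSpace E]

theorem sq_integral_le {f : ℝ → ℝ} (hf : Continuous f) : (∫ t in (0:ℝ)..1, f t)^2 ≤ ∫ t in (0:ℝ)..1, f t ^ 2 := by
  set c := ∫ t in (0:ℝ)..1, f t with hc
  have h1 : 0 ≤ ∫ t in (0:ℝ)..1, (f t - c)^2 := intervalIntegral.integral_nonneg zero_le_one fun _ _ => by positivity
  have h2 : ∫ t in (0:ℝ)..1, (f t - c)^2 = (∫ t in (0:ℝ)..1, f t ^ 2) - 2 * c * c + c^2 := by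
    have : ∀ t, (f t - c)^2 = f t ^ 2 - 2 * c * f t + c^2 := fun t => by ring
    simp_rw [this]
    rw [intervalIntegral.integral_add, intervalIntegral.integral_sub, intervalIntegral.integral_const_mul]
    · simp [hc]
    all_goals exact Continuous.intervalIntegrable (by fun_prop) _ _
  nlinarith

theorem diff_sq_le {U : E → ℝ} (hU : ContDiff ℝ 1 U) (x z : E) :
    ‖U (x + z) - U x‖ₑ ^ 2 ≤ ‖z‖ₑ ^ 2 * ∫⁻ t in Set.Icc (0:ℝ) 1, ‖fderiv ℝ U (x + t • z)‖ₑ ^ 2 := by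
  have hdc : Continuous (fderiv ℝ U) := hU.continuous_fderiv one_ne_zero
  have hder : ∀ t : ℝ, HasDerivAt (fun t : ℝ => U (x + t • z)) (fderiv ℝ U (x + t • z) z) t := by
    intro t
    have h1 : HasDerivAt (fun t : ℝ => x + t • z) z t := by
      simpa using ((hasDerivAt_id t).smul_const z).const_add x
    exact ((hU.differentiable one_ne_zero _).hasFDerivAt).comp_hasDerivAt t h1
  have hftc : ∫ t in (0:ℝ)..1, fderiv ℝ U (x + t • z) z = U (x + z) - U x := by
    rw [intervalIntegral.integral_eq_sub_of_hasDerivAt (fun t _ => hder t)]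
    · simp
    · exact Continuous.intervalIntegrable (by fun_prop) _ _
  have hcf : Continuous fun t : ℝ => ‖fderiv ℝ U (x + t • z)‖ := by fun_prop
  have h3 : |U (x + z) - U x| ≤ ‖z‖ * ∫ t in (0:ℝ)..1, ‖fderiv ℝ U (x + t • z)‖ := by
    rw [← hftc, ← intervalIntegral.integral_const_mul]
    refine (intervalIntegral.abs_integral_le_integral_abs zero_le_one).trans ?_
    apply intervalIntegral.integral_mono_on zero_le_one
    · exact Continuous.intervalIntegrable (by fun_prop) _ _
    · exact Continuous.intervalIntegrable (by fun_prop) _ _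
    · intro t _
      rw [mul_comm]
      exact (fderiv ℝ U (x + t • z)).le_opNorm z
  have h4 : (U (x + z) - U x)^2 ≤ ‖z‖^2 * ∫ t in (0:ℝ)..1, ‖fderiv ℝ U (x + t • z)‖ ^ 2 := by
    rw [← sq_abs]
    calc _ ≤ (‖z‖ * ∫ t in (0:ℝ)..1, ‖fderiv ℝ U (x + t • z)‖)^2 := by gcongr
      _ = ‖z‖^2 * (∫ t in (0:ℝ)..1, ‖fderiv ℝ U (x + t • z)‖)^2 := by ring
      _ ≤ _ := by gcongr; exact sq_integral_le hcf
  have e1 : ∫⁻ t in Set.Icc (0:ℝ) 1, ‖fderiv ℝ U (x + t • z)‖ₑ ^ 2 = ENNReal.ofReal (∫ t in (0:ℝ)..1, ‖fderiv ℝ U (x + t • z)‖ ^ 2) := by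
    rw [intervalIntegral.integral_of_le zero_le_one, ← integral_Icc_eq_integral_Ioc, ofReal_integral_eq_lintegral_ofReal]
    · congr 1; ext t
      rw [ENNReal.ofReal_pow (norm_nonneg _), ofReal_norm]
    · exact Continuous.integrableOn_Icc (by fun_prop)
    · exact Eventually.of_forall fun _ => by positivity
  rw [e1, ← ofReal_norm z, ← ENNReal.ofReal_pow (norm_nonneg _), ← ENNReal.ofReal_mul (by positivity),
    ← ofReal_norm, ← ENNReal.ofReal_pow (norm_nonneg _)]
  apply ENNReal.ofReal_le_ofReal
  rw [Real.norm_eq_abs, sq_abs]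
  exact h4

theorem setLInt_translate_le (f : E → ℝ≥0∞) (v : E) {a b : ℝ} (h : ‖v‖ + a ≤ b) :
    ∫⁻ x in ball (0:E) a, f (x + v) ≤ ∫⁻ x in ball (0:E) b, f x := by
  rw [← lintegral_indicator measurableSet_ball, ← lintegral_indicator measurableSet_ball,
    ← lintegral_add_right_eq_self ((ball (0:E) b).indicator f) v]
  apply lintegral_mono
  intro x
  show (ball (0:E) a).indicator (fun x => f (x + v)) x ≤ (ball (0:E) b).indicator f (x + v)
  by_cases hx : x ∈ ball (0:E) a
  · rw [Set.indicator_of_mem hx, Set.indicator_of_mem]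
    rw [mem_ball_zero_iff] at hx ⊢
    linarith [norm_add_le x v]
  · rw [Set.indicator_of_notMem hx]; exact zero_le

theorem diff_int_le {U : E → ℝ} (hU : ContDiff ℝ 1 U) {z : E} (hz : ‖z‖ < 6) :
    ∫⁻ x in ball (0:E) 3, ‖U (x + z) - U x‖ₑ ^ 2 ≤ 36 * ∫⁻ x in ball (0:E) 9, ‖fderiv ℝ U x‖ₑ ^ 2 := by
  have hdc : Continuous (fderiv ℝ U) := hU.continuous_fderiv one_ne_zero
  calc _ ≤ ∫⁻ x in ball (0:E) 3, 36 * ∫⁻ t in Set.Icc (0:ℝ) 1, ‖fderiv ℝ U (x + t • z)‖ₑ ^ 2 := by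
        apply lintegral_mono
        intro x
        refine (diff_sq_le hU x z).trans ?_
        refine mul_le_mul_left ?_ _
        have : ‖z‖ₑ ≤ 6 := by
          rw [← ofReal_norm, show (6:ℝ≥0∞) = ENNReal.ofReal 6 by norm_num]
          exact ENNReal.ofReal_le_ofReal hz.le
        calc ‖z‖ₑ^2 ≤ 6^2 := by gcongr
          _ = 36 := by norm_num
    _ = 36 * ∫⁻ x in ball (0:E) 3, ∫⁻ t in Set.Icc (0:ℝ) 1, ‖fderiv ℝ U (x + t • z)‖ₑ ^ 2 := by
        rw [lintegral_const_mul' _ _ (by norm_num)]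
    _ = 36 * ∫⁻ t in Set.Icc (0:ℝ) 1, ∫⁻ x in ball (0:E) 3, ‖fderiv ℝ U (x + t • z)‖ₑ ^ 2 := by
        rw [lintegral_lintegral_swap]
        apply Continuous.aemeasurable
        simp only [Function.uncurry_def]
        fun_prop
    _ ≤ 36 * ∫⁻ t in Set.Icc (0:ℝ) 1, ∫⁻ x in ball (0:E) 9, ‖fderiv ℝ U x‖ₑ ^ 2 := by
        gcongr 36 * ?_
        apply setLIntegral_mono' measurableSet_Icc
        intro t ht
        apply setLInt_translate_le (fun y => ‖fderiv ℝ U y‖ₑ ^ 2)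
        rw [norm_smul, Real.norm_of_nonneg ht.1]
        have := ht.2
        nlinarith [norm_nonneg z, ht.1]
    _ = _ := by simp

theorem poincare (E : Type*) [NormedAddCommGroup E] [InnerProductSpace ℝ E] [FiniteDimensional ℝ E]
  [MeasurableSpace E] [BorelSpace E] : ∃ C : ℝ≥0, ∀ U : E → ℝ, ContDiff ℝ 1 U → 
    ∃ m : ℝ, ∫⁻ x in ball (0:E) 3, ‖U x - m‖ₑ ^ 2 ≤ C * ∫⁻ x in ball (0:E) 9, ‖fderiv ℝ U x‖ₑ ^ 2 := by
  set B6 := volume (ball (0:E) 6)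
  set B3 := volume (ball (0:E) 3)
  have hB6 : B6 ≠ ⊤ := measure_ball_lt_top.ne
  have hB3 : B3 ≠ ⊤ := measure_ball_lt_top.ne
  have hB30 : B3 ≠ 0 := (measure_ball_pos _ _ (by norm_num)).ne'
  have hK : B3⁻¹ * (36 * B6) ≠ ⊤ := by
    apply ENNReal.mul_ne_top (ENNReal.inv_ne_top.2 hB30) (ENNReal.mul_ne_top (by norm_num) hB6)
  refine ⟨(B3⁻¹ * (36 * B6)).toNNReal, fun U hU => ?_⟩
  have hUc := hU.continuous
  rw [ENNReal.coe_toNNReal hK]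
  set D := ∫⁻ x in ball (0:E) 9, ‖fderiv ℝ U x‖ₑ ^ 2
  have hmeas : Measurable (fun q : E × E => ‖U q.2 - U q.1‖ₑ ^ 2) := Continuous.measurable (by fun_prop)
  have htot : ∫⁻ x' in ball (0:E) 3, ∫⁻ x in ball (0:E) 3, ‖U x - U x'‖ₑ ^ 2 ≤ B6 * (36 * D) := by
    calc _ ≤ ∫⁻ x' in ball (0:E) 3, ∫⁻ z in ball (0:E) 6, ‖U (x' + z) - U x'‖ₑ ^ 2 := by
          apply setLIntegral_mono' measurableSet_ball
          intro x' hx'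
          have := setLInt_translate_le (fun z => ‖U (x' + z) - U x'‖ₑ ^ 2) (-x') (a := 3) (b := 6)
            (by rw [mem_ball_zero_iff] at hx'; rw [norm_neg]; linarith)
          simpa using this
      _ = ∫⁻ z in ball (0:E) 6, ∫⁻ x' in ball (0:E) 3, ‖U (x' + z) - U x'‖ₑ ^ 2 := by
          rw [lintegral_lintegral_swap]
          apply Continuous.aemeasurable
          simp only [Function.uncurry_def]
          fun_prop
      _ ≤ ∫⁻ z in ball (0:E) 6, 36 * D := by
          apply setLIntegral_mono' measurableSet_ball
          intro z hz
          exact diff_int_le hU (by rwa [mem_ball_zero_iff] at hz)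
      _ = _ := by rw [setLIntegral_const, mul_comm]
  obtain ⟨x', hx', hle⟩ := exists_le_setLAverage (μ := volume) (s := ball (0:E) 3) hB30 hB3
    (f := fun x' => ∫⁻ x in ball (0:E) 3, ‖U x - U x'‖ₑ ^ 2)
    (Measurable.lintegral_prod_right (f := fun (x' x : E) => ‖U x - U x'‖ₑ ^ 2) hmeas).aemeasurable
  refine ⟨U x', hle.trans ?_⟩
  rw [setLAverage_eq, ENNReal.div_eq_inv_mul]
  calc _ ≤ B3⁻¹ * (B6 * (36 * D)) := by gcongr
    _ = _ := by ring

theorem ennreal_add_sq (a b : ℝ≥0∞) : (a + b) ^ 2 ≤ 2 * a ^ 2 + 2 * b ^ 2 := by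
  rcases eq_or_ne a ⊤ with ha | ha
  · simp [ha]
  rcases eq_or_ne b ⊤ with hb | hb
  · simp [hb]
  lift a to ℝ≥0 using ha
  lift b to ℝ≥0 using hb
  rw [← mul_add]
  exact_mod_cast (add_sq_le : (a + b) ^ 2 ≤ 2 * (a ^ 2 + b ^ 2))

theorem local_sob (E : Type*) [NormedAddCommGroup E] [InnerProductSpace ℝ E] [FiniteDimensional ℝ E]
  [MeasurableSpace E] [BorelSpace E] (hn : 3 ≤ Module.finrank ℝ E) : ∃ C : ℝ≥0, ∀ U : E → ℝ, ContDiff ℝ 1 U →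
    ∀ Z : Set E, MeasurableSet Z → Z ⊆ ball 0 2 → (∀ x ∈ Z, U x = 0) →
    volume Z ^ (((Module.finrank ℝ E : ℝ) - 2) / Module.finrank ℝ E) * ∫⁻ x in ball (0:E) 1, ‖U x‖ₑ ^ 2 ≤
      C * ∫⁻ x in ball (0:E) 9, ‖fderiv ℝ U x‖ₑ ^ 2 := by
  set n := Module.finrank ℝ E with hnn
  have hn' : (3:ℝ) ≤ n := by exact_mod_cast hn
  obtain ⟨C₁, hC₁⟩ := poincare E
  let χ : ContDiffBump (0:E) := ⟨2, 5/2, by norm_num, by norm_num⟩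
  obtain ⟨Cχ, hCχ⟩ : ∃ C, ∀ x, ‖fderiv ℝ χ x‖ ≤ C :=
    (χ.contDiff (n := 1).continuous_fderiv one_ne_zero).bounded_above_of_compact_support (χ.hasCompactSupport.fderiv ℝ)
  have hCχ0 : 0 ≤ Cχ := (norm_nonneg _).trans (hCχ 0)
  set θ : ℝ := ((n : ℝ) - 2) / n with hθ
  have hθ0 : 0 ≤ θ := div_nonneg (by linarith) (by linarith)
  set p' : ℝ≥0 := ⟨2 * n / (n - 2), div_nonneg (by positivity) (by linarith)⟩ with hp'
  have hp'v : (p' : ℝ) = 2 * n / (n - 2) := rfl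
  have hn2 : (0:ℝ) < n - 2 := by linarith
  have hp'0 : 0 < (p':ℝ) := by rw [hp'v]; positivity
  set S : ℝ≥0 := SNormLESNormFDerivOfEqConst ℝ (volume : Measure E) 2 with hS
  set V2 := volume (ball (0:E) 2)
  set V1 := volume (ball (0:E) 1)
  have hV2 : V2 ≠ ⊤ := measure_ball_lt_top.ne
  have hV1 : V1 ≠ ⊤ := measure_ball_lt_top.ne
  set cχ : ℝ≥0∞ := ENNReal.ofReal Cχ with hcχ
  set KK : ℝ≥0∞ := 2 * (V2 ^ θ * C₁) + 2 * (V1 * (S ^ 2 * (2 + 2 * (cχ ^ 2 * C₁)))) with hKK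
  have hKKt : KK ≠ ⊤ := by
    have : V2 ^ θ ≠ ⊤ := ENNReal.rpow_ne_top_of_nonneg hθ0 hV2
    have hcχt : cχ ≠ ⊤ := ENNReal.ofReal_ne_top
    finiteness
  refine ⟨KK.toNNReal, fun U hU Z hZm hZ hZ0 => ?_⟩
  rw [ENNReal.coe_toNNReal hKKt]
  obtain ⟨m, hm⟩ := hC₁ U hU
  set D := ∫⁻ x in ball (0:E) 9, ‖fderiv ℝ U x‖ₑ ^ 2 with hD
  let w : E → ℝ := fun x => χ x * (U x - m)
  have hw : ContDiff ℝ 1 w := χ.contDiff.mul (hU.sub contDiff_const)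
  have hwc : HasCompactSupport w := χ.hasCompactSupport.mul_right
  have hgns := eLpNorm_le_eLpNorm_fderiv_of_eq (volume : Measure E) hw hwc (p := 2) (p' := p') (by norm_num) (by omega)
    (by rw [hp'v, ← hnn]; push_cast; field_simp)
  have hgrad : ∀ x, ‖fderiv ℝ w x‖ₑ ^ 2 ≤ (ball (0:E) 3).indicator (fun x => 2 * ‖fderiv ℝ U x‖ₑ ^ 2 + 2 * (cχ ^ 2 * ‖U x - m‖ₑ ^ 2)) x := by
    intro x
    have h1 : HasFDerivAt w (χ x • fderiv ℝ U x + (U x - m) • fderiv ℝ χ x) x := by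
      have hχd : HasFDerivAt χ (fderiv ℝ χ x) x := (χ.contDiff (n := 1).differentiable one_ne_zero x).hasFDerivAt
      have hUd : HasFDerivAt U (fderiv ℝ U x) x := (hU.differentiable one_ne_zero x).hasFDerivAt
      exact hχd.mul (hUd.sub_const m)
    rw [h1.fderiv]
    by_cases hx : x ∈ ball (0:E) 3
    · rw [Set.indicator_of_mem hx]
      have h2 : ‖χ x • fderiv ℝ U x + (U x - m) • fderiv ℝ χ x‖ₑ ≤ ‖fderiv ℝ U x‖ₑ + cχ * ‖U x - m‖ₑ := by
        refine (enorm_add_le (χ x • fderiv ℝ U x) ((U x - m) • fderiv ℝ χ x)).trans ?_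
        rw [enorm_smul, enorm_smul]
        have h3 : ‖χ x‖ₑ ≤ 1 := by
          rw [← ofReal_norm, Real.norm_of_nonneg χ.nonneg]
          exact ENNReal.ofReal_le_one.2 χ.le_one
        have h4 : ‖fderiv ℝ χ x‖ₑ ≤ cχ := by
          rw [← ofReal_norm]
          exact ENNReal.ofReal_le_ofReal (hCχ x)
        calc _ ≤ 1 * ‖fderiv ℝ U x‖ₑ + ‖U x - m‖ₑ * cχ := by gcongr
          _ = _ := by rw [one_mul, mul_comm]
      calc _ ≤ (‖fderiv ℝ U x‖ₑ + cχ * ‖U x - m‖ₑ) ^ 2 := by gcongr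
        _ ≤ _ := ennreal_add_sq _ _
        _ = _ := by rw [mul_pow]
    · have hx3 : ¬ ‖x‖ < 3 := by rwa [mem_ball_zero_iff] at hx
      have hts : x ∉ tsupport χ := by
        rw [χ.tsupport_eq, mem_closedBall_zero_iff]
        show ¬ ‖x‖ ≤ 5/2
        intro h; exact hx3 (by linarith)
      have h5 : χ x = 0 := image_eq_zero_of_notMem_tsupport hts
      have h6 : fderiv ℝ χ x = 0 := by
        by_contra hne
        exact hts (support_fderiv_subset ℝ hne)
      have h7 : χ x • fderiv ℝ U x + (U x - m) • fderiv ℝ χ x = 0 := by rw [h5, h6, zero_smul, smul_zero, add_zero]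
      have h8 : ‖(0 : E →L[ℝ] ℝ)‖ₑ ^ 2 = 0 := by rw [← ofReal_norm, norm_zero]; simp
      rw [h7, h8]; exact zero_le
  have hgi : ∫⁻ x, ‖fderiv ℝ w x‖ₑ ^ 2 ≤ (2 + 2 * (cχ ^ 2 * C₁)) * D := by
    refine (lintegral_mono hgrad).trans ?_
    have hdc : Continuous (fderiv ℝ U) := hU.continuous_fderiv one_ne_zero
    have hUc := hU.continuous
    rw [lintegral_indicator measurableSet_ball, lintegral_add_left ((Continuous.measurable (f := fun x => ‖fderiv ℝ U x‖ₑ ^ 2) (by fun_prop)).const_mul 2),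
      lintegral_const_mul' _ _ (by norm_num), lintegral_const_mul' _ _ (by norm_num), lintegral_const_mul' _ _ (by finiteness)]
    have hD3 : ∫⁻ x in ball (0:E) 3, ‖fderiv ℝ U x‖ₑ ^ 2 ≤ D := lintegral_mono_set (ball_subset_ball (by norm_num))
    calc _ ≤ 2 * D + 2 * (cχ ^ 2 * (C₁ * D)) := by gcongr
      _ = _ := by ring
  have hmZ : ‖m‖ₑ ^ 2 * volume Z ^ θ ≤ S ^ 2 * ((2 + 2 * (cχ ^ 2 * C₁)) * D) := by
    have h1 : ‖m‖ₑ * volume Z ^ (1 / (p':ℝ)) ≤ eLpNorm w p' volume := by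
      rw [eLpNorm_nnreal_eq_lintegral (by intro h; rw [h] at hp'0; simp at hp'0)]
      have : ‖m‖ₑ ^ (p':ℝ) * volume Z ≤ ∫⁻ x, ‖w x‖ₑ ^ (p':ℝ) := by
        calc _ = ∫⁻ x in Z, ‖m‖ₑ ^ (p':ℝ) := by rw [setLIntegral_const]
          _ ≤ ∫⁻ x in Z, ‖w x‖ₑ ^ (p':ℝ) := by
            apply setLIntegral_mono' hZm
            intro x hx
            have hχ1 : χ x = 1 := χ.one_of_mem_closedBall (ball_subset_closedBall (hZ hx))
            have : w x = - m := by simp [w, hχ1, hZ0 x hx]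
            rw [this, enorm_neg]
          _ ≤ _ := setLIntegral_le_lintegral _ _
      calc _ = (‖m‖ₑ ^ (p':ℝ) * volume Z) ^ (1 / (p':ℝ)) := by
            rw [ENNReal.mul_rpow_of_nonneg _ _ (by positivity), ← ENNReal.rpow_mul, mul_one_div_cancel hp'0.ne', ENNReal.rpow_one]
        _ ≤ _ := by gcongr
    have h2 : eLpNorm (fderiv ℝ w) ((2:ℝ≥0):ℝ≥0∞) volume ^ 2 = ∫⁻ x, ‖fderiv ℝ w x‖ₑ ^ 2 := by
      rw [eLpNorm_nnreal_eq_lintegral (by norm_num), ← ENNReal.rpow_two, ← ENNReal.rpow_mul]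
      norm_num
    calc ‖m‖ₑ ^ 2 * volume Z ^ θ = (‖m‖ₑ * volume Z ^ (1 / (p':ℝ))) ^ 2 := by
          rw [mul_pow, ← ENNReal.rpow_two (volume Z ^ _), ← ENNReal.rpow_mul]
          congr 2
          rw [hp'v, hθ]; field_simp
      _ ≤ (S * eLpNorm (fderiv ℝ w) ((2:ℝ≥0):ℝ≥0∞) volume) ^ 2 := by
          exact pow_le_pow_left' (h1.trans hgns) 2
      _ = S ^ 2 * ∫⁻ x, ‖fderiv ℝ w x‖ₑ ^ 2 := by rw [mul_pow, h2]
      _ ≤ _ := by gcongr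
  have hUi : ∫⁻ x in ball (0:E) 1, ‖U x‖ₑ ^ 2 ≤ 2 * (C₁ * D) + 2 * (‖m‖ₑ ^ 2 * V1) := by
    have hUc := hU.continuous
    calc _ ≤ ∫⁻ x in ball (0:E) 1, (2 * ‖U x - m‖ₑ ^ 2 + 2 * ‖m‖ₑ ^ 2) := by
          apply lintegral_mono
          intro x
          refine le_trans ?_ (ennreal_add_sq _ _)
          have : ‖U x‖ₑ ≤ ‖U x - m‖ₑ + ‖m‖ₑ := by
            simpa using enorm_add_le (U x - m) m
          show ‖U x‖ₑ ^ 2 ≤ _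
          gcongr
      _ = 2 * (∫⁻ x in ball (0:E) 1, ‖U x - m‖ₑ ^ 2) + 2 * ‖m‖ₑ ^ 2 * V1 := by
          rw [lintegral_add_left ((Continuous.measurable (f := fun x => ‖U x - m‖ₑ ^ 2) (by fun_prop)).const_mul 2), lintegral_const_mul' _ _ (by norm_num), setLIntegral_const]
      _ ≤ 2 * (C₁ * D) + 2 * ‖m‖ₑ ^ 2 * V1 := by
          gcongr
          exact (lintegral_mono_set (ball_subset_ball (by norm_num))).trans hm
      _ = _ := by ring
  calc volume Z ^ θ * ∫⁻ x in ball (0:E) 1, ‖U x‖ₑ ^ 2 ≤ volume Z ^ θ * (2 * (C₁ * D) + 2 * (‖m‖ₑ ^ 2 * V1)) := by gcongr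
    _ = 2 * (volume Z ^ θ * C₁ * D) + 2 * (V1 * (‖m‖ₑ ^ 2 * volume Z ^ θ)) := by ring
    _ ≤ 2 * (V2 ^ θ * C₁ * D) + 2 * (V1 * (S ^ 2 * ((2 + 2 * (cχ ^ 2 * C₁)) * D))) := by
        gcongr
        exact measure_mono hZ
    _ = _ := by rw [hKK]; ring

end PartE


section PartF
set_option linter.unusedSectionVars false
variable {E : Type*} [NormedAddCommGroup E] [InnerProductSpace ℝ E] [FiniteDimensional ℝ E]
  [MeasurableSpace E] [BorelSpace E]

theorem IsTrig.contDiff {φ : E → ℝ} (h : IsTrig φ) : ContDiff ℝ 2 φ := by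
  obtain ⟨S, a, hS, hφ⟩ := h
  have : φ = fun x => ∑ k ∈ S, ((a k).re * Real.cos (inner ℝ k x) - (a k).im * Real.sin (inner ℝ k x)) := by
    ext x
    have := congrArg Complex.re (hφ x)
    rw [Complex.ofReal_re] at this
    rw [this, Complex.re_sum]
    refine Finset.sum_congr rfl fun k _ => ?_
    rw [mul_comm Complex.I, Complex.exp_mul_I]
    simp [← Complex.ofReal_cos, ← Complex.ofReal_sin]
  rw [this]
  refine ContDiff.sum fun k _ => ?_
  have hi : ContDiff ℝ 2 (fun x : E => (inner ℝ k x : ℝ)) := contDiff_const.inner ℝ contDiff_id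
  exact (contDiff_const.mul (Real.contDiff_cos.comp hi)).sub (contDiff_const.mul (Real.contDiff_sin.comp hi))

theorem IsTrig.bdd {φ : E → ℝ} (h : IsTrig φ) : ∃ M, 0 ≤ M ∧ ∀ x, |φ x| ≤ M := by
  obtain ⟨S, a, hS, hφ⟩ := h
  refine ⟨∑ k ∈ S, ‖a k‖, by positivity, fun x => ?_⟩
  rw [← Real.norm_eq_abs, ← Complex.norm_real, hφ]
  refine (norm_sum_le _ _).trans (Finset.sum_le_sum fun k _ => ?_)
  rw [norm_mul, mul_comm Complex.I, Complex.norm_exp_ofReal_mul_I, mul_one]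

theorem trig_deriv {φ : E → ℝ} {S : Finset E} {a : E → ℂ} (hd : Differentiable ℝ φ)
    (hφ : ∀ x, (φ x : ℂ) = ∑ k ∈ S, a k * Complex.exp (Complex.I * (inner ℝ k x : ℝ))) (v : E) (x : E) :
    ((fderiv ℝ φ x v : ℝ) : ℂ) = ∑ k ∈ S, (a k * (Complex.I * (inner ℝ k v : ℝ))) * Complex.exp (Complex.I * (inner ℝ k x : ℝ)) := by
  have h1 : HasDerivAt (fun t : ℝ => φ (x + t • v)) (fderiv ℝ φ x v) 0 := by
    have h := ((hd x).hasFDerivAt).hasLineDerivAt v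
    exact h
  have h2 := h1.ofReal_comp
  have h3 : HasDerivAt (fun t : ℝ => ∑ k ∈ S, a k * Complex.exp (Complex.I * (inner ℝ k (x + t • v) : ℝ)))
      (∑ k ∈ S, (a k * (Complex.I * (inner ℝ k v : ℝ))) * Complex.exp (Complex.I * (inner ℝ k x : ℝ))) 0 := by
    refine HasDerivAt.fun_sum fun k _ => ?_
    have h4 : HasDerivAt (fun t : ℝ => (inner ℝ k (x + t • v) : ℝ)) (inner ℝ k v) 0 := by
      have : (fun t : ℝ => (inner ℝ k (x + t • v) : ℝ)) = fun t => inner ℝ k x + t * inner ℝ k v := by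
        ext t; rw [inner_add_right, inner_smul_right]
      rw [this]
      simpa using ((hasDerivAt_id (0:ℝ)).mul_const (inner ℝ k v)).const_add (inner ℝ k x)
    have h5 := ((h4.ofReal_comp.const_mul Complex.I).cexp).const_mul (a k)
    refine HasDerivAt.congr_deriv h5 ?_
    rw [zero_smul, add_zero]; ring
  have h6 : (fun t : ℝ => ((φ (x + t • v) : ℝ) : ℂ)) = (fun t : ℝ => ∑ k ∈ S, a k * Complex.exp (Complex.I * (inner ℝ k (x + t • v) : ℝ))) := by
    ext t; rw [hφ]
  rw [← h6] at h3
  exact h2.unique h3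

theorem IsTrig.deriv {φ : E → ℝ} (h : IsTrig φ) (v : E) : IsTrig (fun x => fderiv ℝ φ x v) := by
  have hd := h.contDiff.differentiable (by norm_num)
  obtain ⟨S, a, hS, hφ⟩ := h
  exact ⟨S, _, hS, fun x => trig_deriv hd hφ v x⟩

theorem IsTrig.neg {φ : E → ℝ} (h : IsTrig φ) : IsTrig (fun x => - φ x) := by
  obtain ⟨S, a, hS, hφ⟩ := h
  refine ⟨S, fun k => - a k, hS, fun x => ?_⟩
  push_cast; rw [hφ, ← Finset.sum_neg_distrib]
  exact Finset.sum_congr rfl fun k _ => by ring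

theorem IsTrig.lap {φ : E → ℝ} (h : IsTrig φ) {ι : Type*} [Fintype ι] (b : OrthonormalBasis ι ℝ E) (x : E) :
    ∑ i, fderiv ℝ (fun y => fderiv ℝ φ y (b i)) x (b i) = - φ x := by
  have hd := h.contDiff.differentiable (by norm_num)
  have hd2 := fun v => (h.deriv v).contDiff.differentiable (by norm_num)
  obtain ⟨S, a, hS, hφ⟩ := h
  have h1 := fun v => trig_deriv (hd2 v) (trig_deriv hd hφ v) v x
  rw [← Complex.ofReal_inj]
  push_cast
  rw [hφ, ← Finset.sum_neg_distrib]
  simp_rw [h1]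
  rw [Finset.sum_comm]
  refine Finset.sum_congr rfl fun k hk => ?_
  have h2 := b.sum_sq_inner_left k
  rw [hS k hk] at h2
  have h3 : (∑ i, ((inner ℝ k (b i) : ℝ) : ℂ)^2) = 1 := by
    rw [← Complex.ofReal_one]; norm_cast; simpa using h2
  rw [← Finset.sum_mul, ← neg_mul]; congr 1
  calc _ = ∑ i, (- a k) * ((inner ℝ k (b i) : ℝ) : ℂ)^2 := by
        refine Finset.sum_congr rfl fun i _ => ?_
        linear_combination (a k * ((inner ℝ k (b i) : ℝ) : ℂ)^2) * Complex.I_sq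
    _ = _ := by rw [← Finset.mul_sum, h3, mul_one]

theorem ind_hasFDerivAt {f : E → ℝ} {f' : E →L[ℝ] ℝ} {Ω : Set E} (hΩ : IsOpen Ω) {x : E} (hf : HasFDerivAt f f' x)
    (h : x ∉ Ω → ((f x = 0 ∧ f' = 0) ∨ ∀ᶠ y in nhds x, y ∉ Ω)) :
    HasFDerivAt (Ω.indicator f) (Ω.indicator (fun _ => f') x) x := by
  by_cases hx : x ∈ Ω
  · rw [Set.indicator_of_mem hx]
    refine hf.congr_of_eventuallyEq ?_
    filter_upwards [hΩ.mem_nhds hx] with y hy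
    rw [Set.indicator_of_mem hy]
  · rw [Set.indicator_of_notMem hx]
    rcases h hx with ⟨h0, h1⟩ | h1
    · rw [hasFDerivAt_iff_isLittleO] at hf ⊢
      refine Asymptotics.IsBigO.trans_isLittleO (.of_bound 1 ?_) hf
      refine Eventually.of_forall fun y => ?_
      rw [Set.indicator_of_notMem hx, h0, h1]
      simp only [sub_zero, _root_.zero_apply, one_mul]
      exact norm_indicator_le_norm_self _ _
    · refine (hasFDerivAt_const (0:ℝ) x).congr_of_eventuallyEq ?_
      filter_upwards [h1] with y hy
      rw [Set.indicator_of_notMem hy]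

theorem ind_cont {F : Type*} [NormedAddCommGroup F] {f : E → F} {Ω : Set E} (hΩ : IsOpen Ω) (hf : Continuous f)
    (h : ∀ x, x ∉ Ω → (f x = 0 ∨ ∀ᶠ y in nhds x, y ∉ Ω)) :
    Continuous (Ω.indicator f) := by
  rw [continuous_iff_continuousAt]
  intro x
  by_cases hx : x ∈ Ω
  · refine hf.continuousAt.congr ?_
    filter_upwards [hΩ.mem_nhds hx] with y hy
    rw [Set.indicator_of_mem hy]
  · rcases h x hx with h0 | h1
    · rw [ContinuousAt, Set.indicator_of_notMem hx]
      have := hf.tendsto x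
      rw [h0] at this
      exact squeeze_zero_norm (fun y => norm_indicator_le_norm_self _ _) (by simpa using this.norm)
    · refine (continuousAt_const (y := (0:F))).congr ?_
      filter_upwards [h1] with y hy
      rw [Set.indicator_of_notMem hy]

/-- weight -/
def wt (x : E) : ℝ := ((1 + ‖x‖ ^ 2) ^ Module.finrank ℝ E)⁻¹

theorem wt_pos (x : E) : 0 < wt x := by unfold wt; positivity

theorem wt_contDiff : ContDiff ℝ 1 (wt : E → ℝ) := by
  unfold wt
  refine ContDiff.inv ?_ fun x => by positivity
  exact (contDiff_const.add (contDiff_norm_sq ℝ)).pow _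

theorem wt_integrable (h : 0 < Module.finrank ℝ E) : Integrable (wt : E → ℝ) := by
  have := integrable_rpow_neg_one_add_norm_sq (E := E) (μ := volume) (r := 2 * Module.finrank ℝ E) (by
    have : (0:ℝ) < Module.finrank ℝ E := by exact_mod_cast h
    linarith)
  refine this.congr (Eventually.of_forall fun x => ?_)
  simp only [wt]
  rw [show -(2 * (Module.finrank ℝ E : ℝ)) / 2 = -(Module.finrank ℝ E : ℝ) by ring, Real.rpow_neg (by positivity), Real.rpow_natCast]

theorem wt_fderiv (x v : E) (hv : ‖v‖ = 1) : |fderiv ℝ wt x v| ≤ 2 * Module.finrank ℝ E * wt x := by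
  set N := Module.finrank ℝ E
  have h1 : HasFDerivAt (fun x : E => 1 + ‖x‖^2) (2 • innerSL ℝ x) x :=
    (HasStrictFDerivAt.hasFDerivAt (hasStrictFDerivAt_norm_sq x)).const_add 1
  have hp : 0 < 1 + ‖x‖^2 := by positivity
  have h2 := ((hasDerivAt_pow N (1 + ‖x‖^2)).inv (by positivity)).comp_hasFDerivAt x h1
  have h3 : HasFDerivAt wt _ x := h2
  rw [h3.fderiv]
  have h4 : |inner ℝ x v| ≤ ‖x‖ := by simpa [hv] using abs_real_inner_le_norm x v
  rcases Nat.eq_zero_or_pos N with h0 | h0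
  · simp [h0]
  have h5 : (1 + ‖x‖^2) ^ N = (1 + ‖x‖^2) ^ (N-1) * (1 + ‖x‖^2) := by
    rw [← pow_succ, Nat.sub_add_cancel h0]
  have h6 : |inner ℝ x v| ≤ 1 + ‖x‖^2 := h4.trans (by nlinarith [sq_nonneg (‖x‖ - 1)])
  have h7 : 0 < (1 + ‖x‖^2) ^ (N-1) := by positivity
  have h9 : ((-(↑N * (1 + ‖x‖ ^ 2) ^ (N - 1)) / ((1 + ‖x‖ ^ 2) ^ N) ^ 2) • (2 • innerSL ℝ x)) v
     = - (2 * N * wt x) * (inner ℝ x v / (1 + ‖x‖^2)) := by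
    simp only [wt]
    rw [show (1 + ‖x‖^2) ^ Module.finrank ℝ E = (1 + ‖x‖^2) ^ N from rfl, h5]
    simp only [_root_.smul_apply, smul_eq_mul, innerSL_apply_apply, nsmul_eq_mul]
    push_cast
    field_simp
  rw [h9, abs_mul, abs_neg, abs_of_nonneg (by have := wt_pos x; positivity)]
  have hw := wt_pos x
  refine mul_le_of_le_one_right (by positivity) ?_
  rw [abs_div, abs_of_pos hp]
  exact div_le_one_of_le₀ h6 hp.le

theorem wt_comp (y z : E) (h : ‖y - z‖ ≤ 9) : wt y ≤ 163 ^ Module.finrank ℝ E * wt z := by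
  unfold wt
  rw [← inv_inv ((163:ℝ)^_), ← mul_inv]
  refine inv_anti₀ (by positivity) ?_
  rw [← inv_pow, ← mul_pow]
  refine pow_le_pow_left₀ (by positivity) ?_ _
  have : ‖z‖ ≤ ‖y‖ + 9 := by
    have := norm_sub_norm_le z y
    rw [norm_sub_rev] at this; linarith
  have h2 : ‖z‖^2 ≤ (‖y‖+9)^2 := pow_le_pow_left₀ (norm_nonneg _) this 2
  rw [inv_mul_le_iff₀ (by norm_num)]
  nlinarith [sq_nonneg (‖y‖ - 9), norm_nonneg y, sq_nonneg ‖y‖]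

end PartF


section PartG
set_option linter.unusedSectionVars false
variable {E : Type*} [NormedAddCommGroup E] [InnerProductSpace ℝ E] [FiniteDimensional ℝ E]
  [MeasurableSpace E] [BorelSpace E]

theorem int_wt (h0 : 0 < Module.finrank ℝ E) {g : E → ℝ} (hg : Measurable g) (M : ℝ) (hM : ∀ x, |g x| ≤ M * wt x) : Integrable g :=
  ((wt_integrable h0).const_mul M).mono' hg.aestronglyMeasurable (Eventually.of_forall hM)

theorem W_hasFDerivAt {φ : E → ℝ} (h : IsTrig φ) {Ω : Set E} (hΩ : IsOpen Ω)
    (hb : ∀ x, x ∉ Ω → (φ x = 0 ∨ ∀ᶠ y in nhds x, y ∉ Ω)) (x : E) :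
    HasFDerivAt (Ω.indicator fun x => φ x ^ 2) (Ω.indicator (fun x => (2 * φ x) • fderiv ℝ φ x) x) x := by
  have hd := h.contDiff.differentiable (by norm_num)
  have h1 : HasFDerivAt (fun x => φ x ^ 2) ((2 * φ x) • fderiv ℝ φ x) x := by
    have := (hd x).hasFDerivAt.pow 2
    refine this.congr_fderiv ?_
    ext v; simp
  refine (ind_hasFDerivAt hΩ h1 fun hx => ?_).congr_fderiv ?_
  · rcases hb x hx with h | h
    · left; simp [h]
    · exact Or.inr h
  · by_cases hx : x ∈ Ω <;> simp [hx]

theorem W_contDiff {φ : E → ℝ} (h : IsTrig φ) {Ω : Set E} (hΩ : IsOpen Ω)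
    (hb : ∀ x, x ∉ Ω → (φ x = 0 ∨ ∀ᶠ y in nhds x, y ∉ Ω)) :
    ContDiff ℝ 1 (Ω.indicator fun x => φ x ^ 2) := by
  have hd := fun x => W_hasFDerivAt h hΩ hb x
  rw [contDiff_one_iff_fderiv]
  refine ⟨fun x => (hd x).differentiableAt, ?_⟩
  have : (fderiv ℝ (Ω.indicator fun x => φ x ^ 2)) = Ω.indicator (fun x => (2 * φ x) • fderiv ℝ φ x) := by
    ext1 x; rw [(hd x).fderiv]
  rw [this]
  refine ind_cont hΩ ?_ fun x hx => ?_
  · exact (continuous_const.mul h.contDiff.continuous).smul (h.contDiff.continuous_fderiv (by norm_num))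
  · rcases hb x hx with h | h
    · left; simp [h]
    · exact Or.inr h

theorem energy (h0 : 0 < Module.finrank ℝ E) {φ : E → ℝ} (h : IsTrig φ) {Ω : Set E} (hΩ : IsOpen Ω)
    (hb : ∀ x, x ∉ Ω → (φ x = 0 ∨ ∀ᶠ y in nhds x, y ∉ Ω)) :
    Integrable (fun x => wt x * (Ω.indicator (fun x => φ x ^ 2) x) ^ 2) ∧
    Integrable (fun x => wt x * ‖fderiv ℝ (Ω.indicator fun x => φ x ^ 2) x‖ ^ 2) ∧
    ∫ x, wt x * ‖fderiv ℝ (Ω.indicator fun x => φ x ^ 2) x‖ ^ 2 ≤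
      2 * (1 + (Module.finrank ℝ E : ℝ)^3) * ∫ x, wt x * (Ω.indicator (fun x => φ x ^ 2) x) ^ 2 := by
  set N := Module.finrank ℝ E with hN
  set b := stdOrthonormalBasis ℝ E with hbdef
  have hd := h.contDiff.differentiable (by norm_num)
  have hbn : ∀ i, ‖b i‖ = 1 := fun i => b.orthonormal.1 i
  have hc : Continuous φ := h.contDiff.continuous
  have hdi : ∀ i, IsTrig (fun x => fderiv ℝ φ x (b i)) := fun i => h.deriv (b i)
  have hdii : ∀ i, IsTrig (fun x => fderiv ℝ (fun y => fderiv ℝ φ y (b i)) x (b i)) := fun i => (hdi i).deriv (b i)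
  set p : Fin N → E → ℝ := fun i x => fderiv ℝ φ x (b i) with hp
  set q : Fin N → E → ℝ := fun i x => fderiv ℝ (p i) x (b i) with hq
  have hpc : ∀ i, Continuous (p i) := fun i => (hdi i).contDiff.continuous
  have hqc : ∀ i, Continuous (q i) := fun i => (hdii i).contDiff.continuous
  have hwc : Continuous (wt : E → ℝ) := wt_contDiff.continuous
  obtain ⟨M, hM0, hM⟩ := h.bdd
  choose P hP0 hP using fun i => (hdi i).bdd
  choose Q hQ0 hQ using fun i => (hdii i).bdd
  -- general integrability
  have hI : ∀ f : E → ℝ, Continuous f → (∃ A, ∀ x, |f x| ≤ A) → Integrable (fun x => wt x * Ω.indicator f x) := by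
    rintro f hf ⟨A, hA⟩
    refine int_wt h0 (hwc.measurable.mul (hf.measurable.indicator hΩ.measurableSet)) A fun x => ?_
    rw [abs_mul, abs_of_pos (wt_pos x), mul_comm]
    refine mul_le_mul_of_nonneg_right ?_ (wt_pos x).le
    exact (norm_indicator_le_norm_self f x).trans (hA x)
  have hφ4 : ∃ A, ∀ x, |φ x ^ 4| ≤ A := ⟨M^4, fun x => by rw [abs_pow]; gcongr; exact hM x⟩
  have hpp : ∀ i, ∃ A, ∀ x, |φ x ^ 2 * p i x ^ 2| ≤ A := fun i => ⟨M^2 * P i ^ 2, fun x => by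
    rw [abs_mul, abs_pow, abs_pow]; gcongr; exacts [hM x, hP i x]⟩
  have hV : ∀ x, (Ω.indicator (fun x => φ x ^ 2) x) ^ 2 = Ω.indicator (fun x => φ x ^ 4) x := by
    intro x; by_cases hx : x ∈ Ω <;> simp [hx]; ring
  have hG : ∀ x, ‖fderiv ℝ (Ω.indicator fun x => φ x ^ 2) x‖ ^ 2 = ∑ i, 4 * Ω.indicator (fun x => φ x ^ 2 * p i x ^ 2) x := by
    intro x
    rw [(W_hasFDerivAt h hΩ hb x).fderiv]
    by_cases hx : x ∈ Ω
    · simp only [Set.indicator_of_mem hx]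
      rw [b.norm_dual]
      refine Finset.sum_congr rfl fun i _ => ?_
      simp [hp]; ring
    · simp [hx]
  simp_rw [hV, hG]
  have iV := hI (fun x => φ x ^ 4) (hc.pow 4) hφ4
  have iP := fun i => hI (fun x => φ x ^ 2 * p i x ^ 2) ((hc.pow 2).mul ((hpc i).pow 2)) (hpp i)
  have iG : Integrable (fun x => wt x * ∑ i, 4 * Ω.indicator (fun x => φ x ^ 2 * p i x ^ 2) x) := by
    simp_rw [Finset.mul_sum]
    refine integrable_finsetSum _ fun i _ => ?_
    refine ((iP i).const_mul 4).congr (Eventually.of_forall fun x => ?_)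
    simp only; ring
  have eG : ∫ x, wt x * ∑ i, 4 * Ω.indicator (fun x => φ x ^ 2 * p i x ^ 2) x = 4 * ∑ i, ∫ x, wt x * Ω.indicator (fun x => φ x ^ 2 * p i x ^ 2) x := by
    rw [← integral_finsetSum _ (fun i _ => iP i), ← integral_const_mul]
    congr 1; ext x
    rw [Finset.mul_sum, Finset.mul_sum]
    exact Finset.sum_congr rfl fun i _ => by ring
  refine ⟨iV, iG, ?_⟩
  -- the fields
  have hF : ∀ i x, HasFDerivAt (Ω.indicator fun x => φ x ^ 3 * p i x)
      (Ω.indicator (fun x => (φ x ^ 3) • fderiv ℝ (p i) x + (p i x) • ((3 * φ x ^ 2) • fderiv ℝ φ x)) x) x := by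
    intro i x
    have hpd : DifferentiableAt ℝ (p i) x := (hdi i).contDiff.differentiable (by norm_num) x
    have h1 : HasFDerivAt (fun x => φ x ^ 3 * p i x) ((φ x ^ 3) • fderiv ℝ (p i) x + (p i x) • ((3 * φ x ^ 2) • fderiv ℝ φ x)) x := by
      refine (((hd x).hasFDerivAt.pow 3).mul hpd.hasFDerivAt).congr_fderiv ?_
      ext v; simp
    refine (ind_hasFDerivAt hΩ h1 fun hx => ?_).congr_fderiv ?_
    · rcases hb x hx with h | h
      · left; simp [h]
      · exact Or.inr h
    · by_cases hx : x ∈ Ω <;> simp [hx]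
  have hFd : ∀ i x, fderiv ℝ (Ω.indicator fun x => φ x ^ 3 * p i x) x (b i) =
      Ω.indicator (fun x => φ x ^ 3 * q i x) x + 3 * Ω.indicator (fun x => φ x ^ 2 * p i x ^ 2) x := by
    intro i x
    rw [(hF i x).fderiv]
    by_cases hx : x ∈ Ω
    · simp [hx, hq, hp]; ring
    · simp [hx]
  have iQ : ∀ i, Integrable (fun x => wt x * Ω.indicator (fun x => φ x ^ 3 * q i x) x) := fun i =>
    hI _ ((hc.pow 3).mul (hqc i)) ⟨M^3 * Q i, fun x => by
      rw [abs_mul, abs_pow]; gcongr; exacts [hM x, hQ i x]⟩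
  have bF : ∀ i x, |φ x ^ 3 * p i x| ≤ M^3 * P i := fun i x => by
      rw [abs_mul, abs_pow]; gcongr; exacts [hM x, hP i x]
  have iF : ∀ i, Integrable (fun x => wt x * Ω.indicator (fun x => φ x ^ 3 * p i x) x) := fun i =>
    hI _ ((hc.pow 3).mul (hpc i)) ⟨_, bF i⟩
  have iW : ∀ i, Integrable (fun x => fderiv ℝ wt x (b i) * Ω.indicator (fun x => φ x ^ 3 * p i x) x) := fun i => by
    refine int_wt h0 (Measurable.mul ?_ (((hc.pow 3).mul (hpc i)).measurable.indicator hΩ.measurableSet)) (2 * N * (M^3 * P i)) fun x => ?_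
    · exact ((wt_contDiff.continuous_fderiv (by norm_num)).clm_apply continuous_const).measurable
    · rw [abs_mul]
      calc _ ≤ (2 * N * wt x) * (M^3 * P i) := by
            refine mul_le_mul (wt_fderiv x _ (hbn i)) ((norm_indicator_le_norm_self (fun x => φ x ^ 3 * p i x) x).trans (bF i x)) (abs_nonneg _) ?_
            have := wt_pos x; positivity
        _ = _ := by ring
  have ibp : ∀ i, (∫ x, wt x * Ω.indicator (fun x => φ x ^ 3 * q i x) x) + 3 * (∫ x, wt x * Ω.indicator (fun x => φ x ^ 2 * p i x ^ 2) x)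
      ≤ (∫ x, wt x * Ω.indicator (fun x => φ x ^ 2 * p i x ^ 2) x) + N^2 * ∫ x, wt x * Ω.indicator (fun x => φ x ^ 4) x := by
    intro i
    have h1 : Integrable (fun x => wt x * fderiv ℝ (Ω.indicator fun x => φ x ^ 3 * p i x) x (b i)) := by
      refine ((iQ i).add ((iP i).const_mul 3)).congr (Eventually.of_forall fun x => ?_)
      simp only [Pi.add_apply]; rw [hFd]; ring
    have h2 := integral_mul_fderiv_eq_neg_fderiv_mul_of_integrable (iW i) h1 (iF i)
      (fun x _ => wt_contDiff.differentiable (by norm_num) x) (fun x _ => (hF i x).differentiableAt)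
    have h3 : (∫ x, wt x * fderiv ℝ (Ω.indicator fun x => φ x ^ 3 * p i x) x (b i)) =
       (∫ x, wt x * Ω.indicator (fun x => φ x ^ 3 * q i x) x) + 3 * (∫ x, wt x * Ω.indicator (fun x => φ x ^ 2 * p i x ^ 2) x) := by
      rw [← integral_const_mul, ← integral_add (iQ i) ((iP i).const_mul 3)]
      congr 1; ext x; rw [hFd]; ring
    rw [← h3, h2, ← integral_neg, ← integral_const_mul, ← integral_add (iP i) (iV.const_mul _)]
    refine integral_mono (iW i).neg ((iP i).add (iV.const_mul _)) fun x => ?_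
    simp only
    by_cases hx : x ∈ Ω
    · simp only [Set.indicator_of_mem hx]
      have h4 := wt_fderiv x _ (hbn i)
      have h5 : -(fderiv ℝ wt x (b i) * (φ x ^ 3 * p i x)) ≤ (2 * N * wt x) * |φ x ^ 3 * p i x| := by
        refine (neg_le_abs _).trans ?_
        rw [abs_mul]
        gcongr
      refine h5.trans ?_
      have h6 : 2 * N * |φ x ^ 3 * p i x| ≤ φ x ^ 2 * p i x ^ 2 + N^2 * φ x ^ 4 := by
        have h7 : |φ x ^ 3 * p i x| = |φ x ^ 2| * |φ x * p i x| := by rw [← abs_mul]; congr 1; ring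
        rw [h7]
        nlinarith [sq_nonneg (N * |φ x ^ 2| - |φ x * p i x|), sq_abs (φ x ^ 2), sq_abs (φ x * p i x)]
      nlinarith [wt_pos x]
    · simp [hx]
  have hsum := Finset.sum_le_sum fun i (_ : i ∈ Finset.univ) => ibp i
  rw [Finset.sum_add_distrib, Finset.sum_add_distrib, ← Finset.mul_sum, Finset.sum_const, Finset.card_univ, Fintype.card_fin, nsmul_eq_mul] at hsum
  have hlap : ∑ i, ∫ x, wt x * Ω.indicator (fun x => φ x ^ 3 * q i x) x = - ∫ x, wt x * Ω.indicator (fun x => φ x ^ 4) x := by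
    rw [← integral_finsetSum _ (fun i _ => iQ i), ← integral_neg]
    congr 1; ext x
    rw [← Finset.mul_sum, ← mul_neg]; congr 1
    by_cases hx : x ∈ Ω
    · simp only [Set.indicator_of_mem hx]
      rw [← Finset.mul_sum, h.lap b x]; ring
    · simp [hx]
  rw [eG]
  rw [hlap] at hsum
  nlinarith [hsum]

end PartG


section PartH
set_option linter.unusedSectionVars false
open scoped ENNReal NNReal
variable {E : Type*} [NormedAddCommGroup E] [InnerProductSpace ℝ E] [FiniteDimensional ℝ E]
  [MeasurableSpace E] [BorelSpace E]

theorem zero_or_disj {φ : E → ℝ} {Ω : Set E} (hΩ : IsOpen Ω)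
    (hb : ∀ x, x ∉ Ω → (φ x = 0 ∨ ∀ᶠ y in nhds x, y ∉ Ω)) {y : E} {h : ℝ} (hno : ¬ ball y h ⊆ Ω) :
    (∀ x ∈ ball y h, x ∉ Ω) ∨ ∃ p ∈ ball y h, φ p = 0 := by
  by_contra hcon
  push Not at hcon
  obtain ⟨⟨x, hx, hxΩ⟩, h2⟩ := hcon
  refine hno (IsPreconnected.subset_left_of_subset_union hΩ (isOpen_interior (s := Ωᶜ)) ?_ ?_ ⟨x, hx, hxΩ⟩ (convex_ball y h).isPreconnected)
  · exact Set.disjoint_left.2 fun z hz hz' => (interior_subset hz') hz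
  · intro z hz
    by_cases hzΩ : z ∈ Ω
    · exact Or.inl hzΩ
    · rcases hb z hzΩ with h3 | h3
      · exact absurd h3 (h2 z hz)
      · right; rw [mem_interior_iff_mem_nhds]; exact h3

theorem wt_tonelli {f : E → ℝ≥0∞} (hf : Measurable f) (h R : ℝ) :
    ∫⁻ y, ENNReal.ofReal (wt y) * ∫⁻ x in ball (0:E) R, f (y + h • x) =
    ∫⁻ x in ball (0:E) R, ∫⁻ z, ENNReal.ofReal (wt (z - h • x)) * f z := by
  have hw : Continuous (wt : E → ℝ) := wt_contDiff.continuous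
  calc _ = ∫⁻ y, ∫⁻ x in ball (0:E) R, ENNReal.ofReal (wt y) * f (y + h • x) := by
        refine lintegral_congr fun y => ?_
        rw [lintegral_const_mul]
        exact hf.comp (by fun_prop)
    _ = ∫⁻ x in ball (0:E) R, ∫⁻ y, ENNReal.ofReal (wt y) * f (y + h • x) := by
        refine lintegral_lintegral_swap ?_
        refine Measurable.aemeasurable ?_
        refine Measurable.mul ?_ (hf.comp (by fun_prop))
        exact (hw.measurable.comp measurable_fst).ennreal_ofReal
    _ = _ := by
        refine lintegral_congr fun x => ?_
        rw [← lintegral_add_right_eq_self (fun z => ENNReal.ofReal (wt (z - h • x)) * f z) (h • x)]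
        simp only [add_sub_cancel_right]

theorem wt_upper {f : E → ℝ≥0∞} (hf : Measurable f) {h R : ℝ} (h0 : 0 ≤ h) (h1 : h ≤ 1) (hR : R ≤ 9) :
    ∫⁻ y, ENNReal.ofReal (wt y) * ∫⁻ x in ball (0:E) R, f (y + h • x) ≤
     163 ^ Module.finrank ℝ E * (volume (ball (0:E) R) * ∫⁻ z, ENNReal.ofReal (wt z) * f z) := by
  rw [wt_tonelli hf]
  calc _ ≤ ∫⁻ x in ball (0:E) R, 163 ^ Module.finrank ℝ E * ∫⁻ z, ENNReal.ofReal (wt z) * f z := by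
        refine setLIntegral_mono' measurableSet_ball fun x hx => ?_
        rw [← lintegral_const_mul' _ _ (by finiteness)]
        refine lintegral_mono fun z => ?_
        rw [← mul_assoc]
        refine mul_le_mul_left ?_ _
        have := wt_comp (z - h • x) z (by
          rw [mem_ball_zero_iff] at hx
          simp only [sub_sub_cancel_left, norm_neg, norm_smul, Real.norm_eq_abs, abs_of_nonneg h0]
          nlinarith [norm_nonneg x])
        refine (ENNReal.ofReal_le_ofReal this).trans ?_
        rw [ENNReal.ofReal_mul (by positivity), ENNReal.ofReal_pow (by norm_num)]
        simp
    _ = _ := by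
      rw [setLIntegral_const]; ring

theorem wt_lower {f : E → ℝ≥0∞} (hf : Measurable f) {h R : ℝ} (h0 : 0 ≤ h) (h1 : h ≤ 1) (hR : R ≤ 9) :
    volume (ball (0:E) R) * (∫⁻ z, ENNReal.ofReal (wt z) * f z) ≤ 163 ^ Module.finrank ℝ E *
    ∫⁻ y, ENNReal.ofReal (wt y) * ∫⁻ x in ball (0:E) R, f (y + h • x) := by
  rw [wt_tonelli hf, ← lintegral_const_mul' (163 ^ Module.finrank ℝ E) (fun x => ∫⁻ z, ENNReal.ofReal (wt (z - h • x)) * f z) (by finiteness)]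
  calc _ = ∫⁻ x in ball (0:E) R, ∫⁻ z, ENNReal.ofReal (wt z) * f z := by
        rw [setLIntegral_const]; ring
    _ ≤ _ := by
        refine setLIntegral_mono' measurableSet_ball fun x hx => ?_
        rw [← lintegral_const_mul' _ _ (by finiteness)]
        refine lintegral_mono fun z => ?_
        rw [← mul_assoc]
        refine mul_le_mul_left ?_ _
        have := wt_comp z (z - h • x) (by
          rw [mem_ball_zero_iff] at hx
          simp only [sub_sub_cancel, norm_smul, Real.norm_eq_abs, abs_of_nonneg h0]
          nlinarith [norm_nonneg x])
        refine (ENNReal.ofReal_le_ofReal this).trans ?_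
        rw [ENNReal.ofReal_mul (by positivity), ENNReal.ofReal_pow (by norm_num)]
        simp

theorem vol_preimage_affine (s : Set E) (y : E) {h : ℝ} (h0 : 0 < h) :
    volume.real ((fun x : E => y + h • x) ⁻¹' s) = (h ^ Module.finrank ℝ E)⁻¹ * volume.real s := by
  have : (fun x : E => y + h • x) ⁻¹' s = (fun x => h • x) ⁻¹' ((fun x => y + x) ⁻¹' s) := rfl
  rw [this, Measure.real, Measure.addHaar_preimage_smul _ h0.ne', measure_preimage_add, ENNReal.toReal_mul,
    ENNReal.toReal_ofReal (by positivity), abs_of_pos (by positivity)]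
  rfl

/-- lower bound on the zero set of W at scale h -/
theorem zero_vol {φ : E → ℝ} (hφ : Continuous φ) {Ω : Set E} (hΩ : IsOpen Ω)
    (hb : ∀ x, x ∉ Ω → (φ x = 0 ∨ ∀ᶠ y in nhds x, y ∉ Ω)) (hs : ∀ x ∈ Ω, 0 < φ x) {y : E} {h D : ℝ} (h0 : 0 < h)
    (hno : ¬ ball y h ⊆ Ω) (hD1 : D ≤ volume.real (ball (0:E) 1))
    (has : ∀ p, φ p = 0 → D * h ^ Module.finrank ℝ E ≤ volume.real ({z | 0 < - φ z} ∩ ball p h)) :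
    D ≤ volume.real ((fun x : E => y + h • x) ⁻¹' Ωᶜ ∩ ball 0 2) := by
  have hfin : volume ((fun x : E => y + h • x) ⁻¹' Ωᶜ ∩ ball 0 2) ≠ ⊤ :=
    ((measure_mono Set.inter_subset_right).trans_lt measure_ball_lt_top).ne
  rcases zero_or_disj hΩ hb hno with h1 | ⟨p, hp, hp0⟩
  · refine hD1.trans (measureReal_mono ?_ hfin)
    intro x hx
    rw [mem_ball_zero_iff] at hx
    refine ⟨?_, by rw [mem_ball_zero_iff]; linarith⟩
    refine h1 _ ?_
    rw [mem_ball, dist_eq_norm, add_sub_cancel_left, norm_smul, Real.norm_eq_abs, abs_of_pos h0]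
    nlinarith
  · have h2 := has p hp0
    have h3 : D ≤ volume.real ((fun x : E => y + h • x) ⁻¹' ({z | 0 < - φ z} ∩ ball p h)) := by
      rw [vol_preimage_affine _ _ h0, inv_mul_eq_div, le_div_iff₀ (by positivity)]; exact h2
    refine h3.trans (measureReal_mono ?_ hfin)
    rintro x ⟨hx1, hx2⟩
    refine ⟨fun hx => ?_, ?_⟩
    · have := hs _ hx
      rw [Set.mem_ofPred_eq] at hx1
      linarith
    · rw [mem_ball_zero_iff]
      have h4 : dist (y + h • x) y < 2 * h := by
        have := dist_triangle (y + h • x) p y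
        rw [mem_ball] at hp hx2; linarith
      rw [dist_eq_norm, add_sub_cancel_left, norm_smul, Real.norm_eq_abs, abs_of_pos h0] at h4
      nlinarith

end PartH


section PartI
set_option linter.unusedSectionVars false
open scoped ENNReal NNReal
variable {E : Type*} [NormedAddCommGroup E] [InnerProductSpace ℝ E] [FiniteDimensional ℝ E]
  [MeasurableSpace E] [BorelSpace E]

theorem fderiv_affine {W : E → ℝ} (hW : Differentiable ℝ W) (y : E) {h : ℝ} (h0 : 0 < h) (x : E) :
    ‖fderiv ℝ (fun x => W (y + h • x)) x‖ₑ ^ 2 = ENNReal.ofReal (h^2) * ‖fderiv ℝ W (y + h • x)‖ₑ ^ 2 := by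
  have h1 : HasFDerivAt (fun x : E => y + h • x) (h • ContinuousLinearMap.id ℝ E) x :=
    ((hasFDerivAt_id x).const_smul h).const_add y
  have h2 := (hW (y + h • x)).hasFDerivAt.comp x h1
  have h3 : fderiv ℝ (fun x => W (y + h • x)) x = h • fderiv ℝ W (y + h • x) := by
    rw [show (fun x => W (y + h • x)) = W ∘ (fun x : E => y + h • x) from rfl, h2.fderiv]
    ext v; simp
  rw [h3, enorm_smul, mul_pow, ← ofReal_norm, Real.norm_eq_abs, abs_of_pos h0, ENNReal.ofReal_pow h0.le]

theorem main_ineq (hn : 3 ≤ Module.finrank ℝ E) {C : ℝ≥0} (hC : ∀ U : E → ℝ, ContDiff ℝ 1 U →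
    ∀ Z : Set E, MeasurableSet Z → Z ⊆ ball 0 2 → (∀ x ∈ Z, U x = 0) →
    volume Z ^ (((Module.finrank ℝ E : ℝ) - 2) / Module.finrank ℝ E) * ∫⁻ x in ball (0:E) 1, ‖U x‖ₑ ^ 2 ≤
      C * ∫⁻ x in ball (0:E) 9, ‖fderiv ℝ U x‖ₑ ^ 2) {φ : E → ℝ} (hφ : IsTrig φ)
    {Ω : Set E} (hΩ : IsOpen Ω) (hne : Ω.Nonempty)
    (hb : ∀ x, x ∉ Ω → (φ x = 0 ∨ ∀ᶠ y in nhds x, y ∉ Ω)) (hs : ∀ x ∈ Ω, 0 < φ x) {h D : ℝ} (h0 : 0 < h) (h1 : h ≤ 1)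
    (hno : ∀ y, ¬ ball y h ⊆ Ω) (hD0 : 0 < D) (hD1 : D ≤ volume.real (ball (0:E) 1))
    (has : ∀ p, φ p = 0 → D * h ^ Module.finrank ℝ E ≤ volume.real ({z | 0 < - φ z} ∩ ball p h)) :
    volume.real (ball (0:E) 1) * D ^ (((Module.finrank ℝ E : ℝ) - 2) / Module.finrank ℝ E) ≤
      (163 ^ Module.finrank ℝ E * (163 ^ Module.finrank ℝ E * (C * volume.real (ball (0:E) 9) * (2 * (1 + (Module.finrank ℝ E : ℝ)^3))))) * h^2 := by
  set N := Module.finrank ℝ E with hN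
  set θ : ℝ := ((N : ℝ) - 2) / N with hθ
  have hθ0 : 0 ≤ θ := by
    have : (3:ℝ) ≤ N := by exact_mod_cast hn
    apply div_nonneg <;> linarith
  set W := Ω.indicator fun x => φ x ^ 2 with hW
  have hW1 : ContDiff ℝ 1 W := W_contDiff hφ hΩ hb
  obtain ⟨iV, iG, hE⟩ := energy (by omega) hφ hΩ hb
  rw [← hW] at iV iG hE
  have hwc : Continuous (wt : E → ℝ) := wt_contDiff.continuous
  have mV : Measurable (fun x => ‖W x‖ₑ ^ 2) := (Continuous.measurable (by have := hW1.continuous; fun_prop))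
  have mG : Measurable (fun x => ‖fderiv ℝ W x‖ₑ ^ 2) := (Continuous.measurable (by have := hW1.continuous_fderiv (by norm_num); fun_prop))
  -- pointwise in y
  have hpt : ∀ y, ENNReal.ofReal (D ^ θ) * (∫⁻ x in ball (0:E) 1, ‖W (y + h • x)‖ₑ ^ 2) ≤
      (C * ENNReal.ofReal (h^2)) * ∫⁻ x in ball (0:E) 9, ‖fderiv ℝ W (y + h • x)‖ₑ ^ 2 := by
    intro y
    have h2 := zero_vol hφ.contDiff.continuous hΩ hb hs h0 (hno y) hD1 has
    set Z := (fun x : E => y + h • x) ⁻¹' Ωᶜ ∩ ball 0 2 with hZ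
    have hZm : MeasurableSet Z := (hΩ.measurableSet.compl.preimage (by fun_prop)).inter measurableSet_ball
    have h3 := hC (fun x => W (y + h • x)) (hW1.comp (by fun_prop)) Z hZm Set.inter_subset_right (by
      rintro x ⟨hx, -⟩
      exact Set.indicator_of_notMem hx _)
    have h4 : ENNReal.ofReal (D ^ θ) ≤ volume Z ^ θ := by
      rw [← ENNReal.ofReal_rpow_of_pos hD0]
      refine ENNReal.rpow_le_rpow ?_ hθ0
      exact ENNReal.ofReal_le_of_le_toReal h2
    refine (mul_le_mul_left h4 _).trans (h3.trans ?_)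
    simp_rw [fderiv_affine (hW1.differentiable (by norm_num)) y h0]
    rw [lintegral_const_mul' _ _ (by finiteness), mul_assoc]
  have hint : ENNReal.ofReal (D ^ θ) * (∫⁻ y, ENNReal.ofReal (wt y) * (∫⁻ x in ball (0:E) 1, ‖W (y + h • x)‖ₑ ^ 2)) ≤
      (C * ENNReal.ofReal (h^2)) * ∫⁻ y, ENNReal.ofReal (wt y) * ∫⁻ x in ball (0:E) 9, ‖fderiv ℝ W (y + h • x)‖ₑ ^ 2 := by
    rw [← lintegral_const_mul' _ _ (by finiteness), ← lintegral_const_mul' _ _ (by finiteness)]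
    refine lintegral_mono fun y => ?_
    calc _ = ENNReal.ofReal (wt y) * (ENNReal.ofReal (D ^ θ) * (∫⁻ x in ball (0:E) 1, ‖W (y + h • x)‖ₑ ^ 2)) := by ring
      _ ≤ ENNReal.ofReal (wt y) * ((C * ENNReal.ofReal (h^2)) * ∫⁻ x in ball (0:E) 9, ‖fderiv ℝ W (y + h • x)‖ₑ ^ 2) := mul_le_mul_right (hpt y) _
      _ = _ := by ring
  have hup := wt_upper mG h0.le h1 (R := 9) le_rfl
  have hlo := wt_lower mV h0.le h1 (R := 1) (by norm_num)
  have eV : (∫⁻ z, ENNReal.ofReal (wt z) * ‖W z‖ₑ ^ 2) = ENNReal.ofReal (∫ x, wt x * W x ^ 2) := by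
    rw [ofReal_integral_eq_lintegral_ofReal iV (Eventually.of_forall fun x => by have := wt_pos x; positivity)]
    refine lintegral_congr fun x => ?_
    rw [ENNReal.ofReal_mul (wt_pos x).le, ← ofReal_norm, ← ENNReal.ofReal_pow (norm_nonneg _), Real.norm_eq_abs, sq_abs]
  have eG : (∫⁻ z, ENNReal.ofReal (wt z) * ‖fderiv ℝ W z‖ₑ ^ 2) = ENNReal.ofReal (∫ x, wt x * ‖fderiv ℝ W x‖ ^ 2) := by
    rw [ofReal_integral_eq_lintegral_ofReal iG (Eventually.of_forall fun x => by have := wt_pos x; positivity)]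
    refine lintegral_congr fun x => ?_
    rw [ENNReal.ofReal_mul (wt_pos x).le, ← ofReal_norm, ← ENNReal.ofReal_pow (norm_nonneg _)]
  set IV := ∫ x, wt x * W x ^ 2 with hIV
  set IG := ∫ x, wt x * ‖fderiv ℝ W x‖ ^ 2 with hIG
  have hIVpos : 0 < IV := by
    rw [hIV, integral_pos_iff_support_of_nonneg (fun x => by have := wt_pos x; positivity) iV]
    refine (hΩ.measure_pos volume hne).trans_le (measure_mono fun x hx => ?_)
    rw [Function.mem_support]
    have := wt_pos x
    have := hs x hx
    rw [hW, Set.indicator_of_mem hx]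
    positivity
  have hIG0 : 0 ≤ IG := integral_nonneg fun x => by have := wt_pos x; positivity
  rw [eG] at hup
  rw [eV] at hlo
  set v1 := volume.real (ball (0:E) 1) with hv1
  set v9 := volume.real (ball (0:E) 9) with hv9
  have e1 : volume (ball (0:E) 1) = ENNReal.ofReal v1 := (ENNReal.ofReal_toReal measure_ball_lt_top.ne).symm
  have e9 : volume (ball (0:E) 9) = ENNReal.ofReal v9 := (ENNReal.ofReal_toReal measure_ball_lt_top.ne).symm
  rw [e9] at hup
  rw [e1] at hlo
  have hv10 : 0 ≤ v1 := measureReal_nonneg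
  have hv90 : 0 ≤ v9 := measureReal_nonneg
  have hDθ : 0 ≤ D ^ θ := by positivity
  have e163 : (163:ℝ≥0∞) ^ N = ENNReal.ofReal (163 ^ N) := by
    rw [ENNReal.ofReal_pow (by norm_num)]; simp
  have eC : (C:ℝ≥0∞) = ENNReal.ofReal C := by simp
  have fin : ENNReal.ofReal (D ^ θ * (v1 * IV)) ≤ ENNReal.ofReal (163 ^ N * (C * h^2 * (163 ^ N * (v9 * IG)))) := by
    calc _ = ENNReal.ofReal (D ^ θ) * (ENNReal.ofReal v1 * ENNReal.ofReal IV) := by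
          rw [ENNReal.ofReal_mul hDθ, ENNReal.ofReal_mul hv10]
      _ ≤ ENNReal.ofReal (D ^ θ) * _ := mul_le_mul_right hlo _
      _ = 163 ^ N * (ENNReal.ofReal (D ^ θ) * _) := by rw [mul_left_comm]
      _ ≤ 163 ^ N * _ := mul_le_mul_right hint _
      _ ≤ 163 ^ N * ((C * ENNReal.ofReal (h^2)) * _) := mul_le_mul_right (mul_le_mul_right hup _) _
      _ = _ := by
        rw [e163, eC, ENNReal.ofReal_mul (by positivity), ENNReal.ofReal_mul (by positivity), ENNReal.ofReal_mul (by positivity),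
          ENNReal.ofReal_mul (by positivity), ENNReal.ofReal_mul (by positivity)]
  rw [ENNReal.ofReal_le_ofReal_iff (by positivity)] at fin
  have fin2 : (v1 * D ^ θ) * IV ≤ ((163 ^ N * (163 ^ N * (C * v9 * (2 * (1 + (N:ℝ)^3))))) * h^2) * IV := by
    calc _ = D ^ θ * (v1 * IV) := by ring
      _ ≤ _ := fin
      _ ≤ 163 ^ N * (C * h^2 * (163 ^ N * (v9 * (2 * (1 + (N:ℝ)^3) * IV)))) := by gcongr
      _ = _ := by ring
  exact le_of_mul_le_mul_right fin2 hIVpos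

theorem global_step_pos (E : Type*) [NormedAddCommGroup E] [InnerProductSpace ℝ E] [FiniteDimensional ℝ E]
  [MeasurableSpace E] [BorelSpace E] (hn : 3 ≤ Module.finrank ℝ E) {e : E} (he : ‖e‖ = 1) (d : ℕ) {K₁ K₂ : ℝ} (hK₁ : 0 < K₁) (hK₂ : 0 < K₂) :
    ∃ a : ℝ, 0 < a ∧ ∀ (β : ℝ) (φ : E → ℝ), 1 ≤ β → IsTrig φ →
      (∀ x, K₁ * β ^ d ≤ (∫ y in ball x β, φ y ^ 2) ∧ (∫ y in ball x β, φ y ^ 2) ≤ K₂ * β ^ d) →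
      ∀ Ω : Set E, IsOpen Ω → Ω.Nonempty → (∀ x, x ∉ Ω → (φ x = 0 ∨ ∀ᶠ y in nhds x, y ∉ Ω)) → (∀ x ∈ Ω, 0 < φ x) →
      ∃ y, ball y (a * β ^ (-(((Module.finrank ℝ E : ℝ) - 1) * ((Module.finrank ℝ E : ℝ) - 2)) / (2 * (Module.finrank ℝ E : ℝ)))) ⊆ Ω := by
  obtain ⟨c, hc, hasym⟩ := asymmetry E he d hK₁ hK₂
  obtain ⟨C, hC⟩ := local_sob E hn
  set N := Module.finrank ℝ E with hN
  have hN3 : (3:ℝ) ≤ N := by exact_mod_cast hn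
  set v1 := volume.real (ball (0:E) 1) with hv1
  have hv10 : 0 < v1 := ENNReal.toReal_pos (measure_ball_pos _ _ one_pos).ne' measure_ball_lt_top.ne
  set c' := min c 1 with hc'
  have hc'0 : 0 < c' := lt_min hc one_pos
  set B : ℝ := (163 ^ N * (163 ^ N * (C * volume.real (ball (0:E) 9) * (2 * (1 + (N : ℝ)^3))))) with hB
  have hB0 : 0 ≤ B := by positivity
  set θ : ℝ := ((N : ℝ) - 2) / N with hθ
  set A : ℝ := v1 * (c' * v1) ^ θ with hA
  have hA0 : 0 < A := by positivity
  set a := min (1/2) (Real.sqrt (A / (2 * (B + 1)))) with ha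
  have ha0 : 0 < a := lt_min (by norm_num) (Real.sqrt_pos.2 (by positivity))
  have ha2 : B * a^2 < A := by
    have h1 : a^2 ≤ A / (2 * (B + 1)) := by
      rw [← Real.sq_sqrt (show 0 ≤ A / (2 * (B + 1)) by positivity)]
      exact pow_le_pow_left₀ ha0.le (min_le_right _ _) 2
    calc B * a^2 ≤ B * (A / (2 * (B + 1))) := by gcongr
      _ < A := by
        rw [mul_div_assoc', div_lt_iff₀ (by positivity)]
        nlinarith
  refine ⟨a, ha0, fun β φ hβ hφ hK Ω hΩ hne hb hs => ?_⟩
  by_contra hno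
  push Not at hno
  have hβ0 : 0 < β := by linarith
  set s : ℝ := -(((N : ℝ) - 1) * ((N : ℝ) - 2)) / (2 * (N : ℝ)) with hs'
  set h := a * β ^ s with hh
  have hs0 : s ≤ 0 := by
    rw [hs', neg_div]; rw [neg_nonpos]; apply div_nonneg
    · apply mul_nonneg <;> linarith
    · linarith
  have h0 : 0 < h := by positivity
  have hha : h ≤ a := mul_le_of_le_one_right ha0.le (Real.rpow_le_one_of_one_le_of_nonpos hβ hs0)
  have h12 : h ≤ 1/2 := hha.trans (min_le_left _ _)
  have hNsub : ((N - 1 : ℕ) : ℝ) = (N:ℝ) - 1 := by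
    rw [Nat.cast_sub (by omega)]; simp
  set D := c' * v1 * (β ^ (N - 1))⁻¹ with hD
  have hβN : 1 ≤ β ^ (N-1) := one_le_pow₀ hβ
  have hD0 : 0 < D := by positivity
  have hD1 : D ≤ v1 := by
    have h1 : (β ^ (N - 1))⁻¹ ≤ 1 := inv_le_one_of_one_le₀ hβN
    calc D ≤ c' * v1 * 1 := by rw [hD]; gcongr
      _ ≤ 1 * v1 * 1 := by gcongr; exact min_le_right _ _
      _ = v1 := by ring
  have hm := main_ineq hn hC hφ hΩ hne hb hs h0 (by linarith) hno hD0 hD1 (fun p hp => by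
    have h1 := hasym β (fun x => - φ x) hβ hφ.neg (by simpa using hK) p h h0 h12 (by simp [hp])
    have h2 := vol_ball_scale (E := E) 1 h0
    rw [mul_one] at h2
    rw [h2] at h1
    have h3 : c' * v1 * h ^ N ≤ volume.real ({z | 0 < - φ z} ∩ ball p h) * β ^ (N-1) := by
      refine le_trans ?_ h1
      calc c' * v1 * h^N ≤ c * v1 * h^N := by gcongr; exact min_le_left _ _
        _ = _ := by ring
    calc D * h^N = (c' * v1 * h^N) / β ^ (N-1) := by rw [hD]; field_simp
      _ ≤ _ := by rw [div_le_iff₀ (by positivity)]; exact h3)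
  have e1 : D ^ θ = (c' * v1) ^ θ * β ^ (2 * s) := by
    rw [hD, Real.mul_rpow (by positivity) (by positivity)]
    congr 1
    rw [← Real.rpow_natCast, ← Real.rpow_neg hβ0.le, ← Real.rpow_mul hβ0.le, hNsub]
    congr 1
    rw [hθ, hs']; field_simp
  have e2 : h^2 = a^2 * β ^ (2*s) := by
    rw [hh, mul_pow, ← Real.rpow_natCast (β ^ s), ← Real.rpow_mul hβ0.le]
    congr 2; push_cast; ring
  have hm2 : v1 * D ^ θ ≤ B * h^2 := hm
  rw [e1, e2] at hm2
  have h5 : 0 < β ^ (2*s) := by positivity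
  have : A * β ^ (2*s) ≤ (B * a^2) * β ^ (2*s) := by rw [hA]; linarith
  have := le_of_mul_le_mul_right this h5
  linarith

theorem global_step (E : Type*) [NormedAddCommGroup E] [InnerProductSpace ℝ E] [FiniteDimensional ℝ E]
  [MeasurableSpace E] [BorelSpace E] (hn : 3 ≤ Module.finrank ℝ E) {e : E} (he : ‖e‖ = 1) (d : ℕ) {K₁ K₂ : ℝ} (hK₁ : 0 < K₁) (hK₂ : 0 < K₂) :
    ∃ a : ℝ, 0 < a ∧ ∀ (β : ℝ) (φ : E → ℝ), 1 ≤ β → IsTrig φ →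
      (∀ x, K₁ * β ^ d ≤ (∫ y in ball x β, φ y ^ 2) ∧ (∫ y in ball x β, φ y ^ 2) ≤ K₂ * β ^ d) →
      ∀ Ω : Set E, IsOpen Ω → Ω.Nonempty → (∀ x, x ∉ Ω → (φ x = 0 ∨ ∀ᶠ y in nhds x, y ∉ Ω)) →
      ((∀ x ∈ Ω, 0 < φ x) ∨ (∀ x ∈ Ω, φ x < 0)) →
      ∃ y, ball y (a * β ^ (-(((Module.finrank ℝ E : ℝ) - 1) * ((Module.finrank ℝ E : ℝ) - 2)) / (2 * (Module.finrank ℝ E : ℝ)))) ⊆ Ω := by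
  obtain ⟨a, ha, H⟩ := global_step_pos E hn he d hK₁ hK₂
  refine ⟨a, ha, fun β φ hβ hφ hK Ω hΩ hne hb hs => ?_⟩
  rcases hs with hs | hs
  · exact H β φ hβ hφ hK Ω hΩ hne hb hs
  · exact H β (fun x => - φ x) hβ hφ.neg (by simpa using hK) Ω hΩ hne (by simpa using hb) (by simpa using hs)

end PartI


section PartJ
set_option linter.unusedSectionVars false
variable {n : ℕ}

/-- half-open unit cube -/
def QQ (a : Fin n → ℝ) : Set (Fin n → ℝ) := {x : Fin n → ℝ | ∀ i, x i ∈ Set.Ioc (a i) (a i + 1)}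

/-- exponential -/
def ee (k : Fin n → ℤ) (x : Fin n → ℝ) : ℂ := Complex.exp (2 * π * Complex.I * (∑ i, (k i : ℝ) * x i : ℝ))

/-- periodic functions -/
def Per (g : (Fin n → ℝ) → ℝ) : Prop := ∀ (x : Fin n → ℝ) (m : Fin n → ℤ), g (fun i => x i + m i) = g x

theorem ee_cont (k : Fin n → ℤ) : Continuous (ee k) := by unfold ee; fun_prop

theorem ee_add (k : Fin n → ℤ) (x y : Fin n → ℝ) : ee k (x + y) = ee k x * ee k y := by
  unfold ee
  rw [← Complex.exp_add]
  congr 1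
  simp only [Pi.add_apply, mul_add, Finset.sum_add_distrib]
  push_cast; ring

theorem ee_neg (k : Fin n → ℤ) (x : Fin n → ℝ) : ee (-k) x * ee k x = 1 := by
  unfold ee
  rw [← Complex.exp_add, ← Complex.exp_zero]
  congr 1
  simp only [Pi.neg_apply, Int.cast_neg, neg_mul, Finset.sum_neg_distrib]
  push_cast; ring

theorem mFourier_coe (k : Fin n → ℤ) (x : Fin n → ℝ) :
    UnitAddTorus.mFourier k (fun i => (x i : UnitAddCircle)) = ee k x := by
  show ∏ i, fourier (k i) (x i : UnitAddCircle) = _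
  simp_rw [fourier_coe_apply]
  rw [← Complex.exp_sum]; unfold ee
  congr 1
  push_cast
  rw [Finset.mul_sum]
  refine Finset.sum_congr rfl fun i _ => by ring

theorem torus_lift {g : (Fin n → ℝ) → ℝ} (hg : Continuous g) (hp : Per g) :
    ∃ F : C(UnitAddTorus (Fin n), ℂ), ∀ x : Fin n → ℝ, F (fun i => (x i : UnitAddCircle)) = g x := by
  have hq : IsOpenQuotientMap (Pi.map (fun (_ : Fin n) => ((↑) : ℝ → UnitAddCircle))) :=
    IsOpenQuotientMap.piMap fun i => QuotientAddGroup.isOpenQuotientMap_mk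
  have key : ∀ x y : Fin n → ℝ, (∀ i, (x i : UnitAddCircle) = y i) → g x = g y := by
    intro x y h
    have h1 : ∀ i, ∃ m : ℤ, x i = y i + m := by
      intro i
      have h2 : ((x i - y i : ℝ) : UnitAddCircle) = 0 := by rw [AddCircle.coe_sub, h i, sub_self]
      obtain ⟨m, hm⟩ := (AddCircle.coe_eq_zero_iff _).1 h2
      exact ⟨m, by simp at hm; linarith⟩
    choose m hm using h1
    rw [← hp y m]; congr 1; ext i; exact hm i
  let f : UnitAddTorus (Fin n) → ℂ := fun t => (g (fun i => Quotient.out (t i)) : ℂ)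
  have hf : ∀ x : Fin n → ℝ, f (Pi.map (fun (_ : Fin n) => ((↑) : ℝ → UnitAddCircle)) x) = g x := by
    intro x
    show ((g _ : ℝ) : ℂ) = _
    congr 1
    refine key _ _ fun i => ?_
    exact Quotient.out_eq _
  refine ⟨⟨f, ?_⟩, fun x => hf x⟩
  rw [hq.isQuotientMap.continuous_iff]
  have : f ∘ (Pi.map (fun (_ : Fin n) => ((↑) : ℝ → UnitAddCircle))) = fun x => (g x : ℂ) := by
    ext x; exact hf x
  rw [this]; fun_prop

theorem QQ_meas (a : Fin n → ℝ) : MeasurableSet (QQ a) := by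
  have : QQ a = Set.pi Set.univ fun i => Set.Ioc (a i) (a i + 1) := by ext; simp [QQ]
  rw [this]; exact MeasurableSet.univ_pi fun i => measurableSet_Ioc

theorem QQ_sub (a : Fin n → ℝ) : QQ a ⊆ Set.Icc a (fun i => a i + 1) := 
  fun x hx => ⟨fun i => (hx i).1.le, fun i => (hx i).2⟩

theorem QQ_int {f : (Fin n → ℝ) → ℂ} (hf : Continuous f) (a : Fin n → ℝ) : IntegrableOn f (QQ a) :=
  (hf.locallyIntegrable.integrableOn_isCompact isCompact_Icc).mono_set (QQ_sub a)

theorem QQ_coeff {g : (Fin n → ℝ) → ℝ} {F : C(UnitAddTorus (Fin n), ℂ)}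
    (hF : ∀ x : Fin n → ℝ, F (fun i => (x i : UnitAddCircle)) = g x) (k : Fin n → ℤ) (a : Fin n → ℝ) :
    UnitAddTorus.mFourierCoeff F k = ∫ x in QQ a, ee (-k) x * g x := by
  rw [UnitAddTorus.mFourierCoeff_eq_integral F k a]
  refine integral_congr_ae (Eventually.of_forall fun x => ?_)
  simp only
  rw [mFourier_coe, hF, smul_eq_mul]

theorem QQ_shift {g : (Fin n → ℝ) → ℝ} (hg : Continuous g) (hp : Per g) (k : Fin n → ℤ) (a : Fin n → ℝ) :
    ∫ x in QQ a, ee (-k) x * g x = ∫ x in QQ 0, ee (-k) x * g x := by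
  obtain ⟨F, hF⟩ := torus_lift hg hp
  rw [← QQ_coeff hF, ← QQ_coeff hF]

theorem QQ_trans {g : (Fin n → ℝ) → ℝ} (hg : Continuous g) (hp : Per g) (k : Fin n → ℤ) (v : Fin n → ℝ) :
    ∫ x in QQ 0, ee (-k) x * g (x + v) = ee k v * ∫ x in QQ 0, ee (-k) x * g x := by
  rw [← QQ_shift hg hp k v, ← integral_const_mul, ← integral_indicator (QQ_meas _), ← integral_indicator (QQ_meas _),
    ← integral_add_right_eq_self ((QQ v).indicator fun a => ee k v * (ee (-k) a * (g a : ℂ))) v]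
  congr 1; ext x
  have hm : x + v ∈ QQ v ↔ x ∈ QQ 0 := by
    simp only [QQ, Set.mem_ofPred_eq, Pi.add_apply, Pi.zero_apply, Set.mem_Ioc]
    refine forall_congr' fun i => ?_
    constructor <;> rintro ⟨h1, h2⟩ <;> constructor <;> linarith
  by_cases hx : x ∈ QQ 0
  · rw [Set.indicator_of_mem hx, Set.indicator_of_mem (hm.2 hx), ee_add]
    linear_combination (- ee (-k) x * g (x + v)) * ee_neg k v
  · rw [Set.indicator_of_notMem hx, Set.indicator_of_notMem (fun h => hx (hm.1 h))]

theorem QQ_deriv {g g' : (Fin n → ℝ) → ℝ} (hg : Continuous g) (hg' : Continuous g') (hp : Per g) (v : Fin n → ℝ)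
    (hd : ∀ x, HasDerivAt (fun s : ℝ => g (x + s • v)) (g' x) 0) (k : Fin n → ℤ) :
    ∫ x in QQ 0, ee (-k) x * g' x = (2 * π * Complex.I * (∑ i, (k i : ℝ) * v i : ℝ)) * ∫ x in QQ 0, ee (-k) x * g x := by
  have hd' : ∀ x s, HasDerivAt (fun s : ℝ => g (x + s • v)) (g' (x + s • v)) s := by
    intro x s
    have h1 := hd (x + s • v)
    have h2 : HasDerivAt (fun t : ℝ => t - s) 1 s := (hasDerivAt_id s).sub_const s
    have h3 := HasDerivAt.comp (h₂ := fun t : ℝ => g (x + s • v + t • v)) s (by simpa using h1) h2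
    rw [mul_one] at h3
    refine h3.congr_of_eventuallyEq (Eventually.of_forall fun t => ?_)
    simp only [Function.comp]
    congr 1; rw [add_assoc, ← add_smul]; congr 2; ring
  have hK : IsCompact (Set.Icc (0 : Fin n → ℝ) (fun i => (0 : Fin n → ℝ) i + 1) ×ˢ Set.Icc (-1:ℝ) 1) := isCompact_Icc.prod isCompact_Icc
  obtain ⟨M, hM⟩ := hK.exists_bound_of_continuousOn (f := fun p : (Fin n → ℝ) × ℝ => ee (-k) p.1 * g' (p.1 + p.2 • v))
    (Continuous.continuousOn (by have := ee_cont (-k); fun_prop))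
  have hec := ee_cont (-k)
  have h1 := (hasDerivAt_integral_of_dominated_loc_of_deriv_le (μ := volume.restrict (QQ (0 : Fin n → ℝ))) (x₀ := (0:ℝ)) (s := Set.Icc (-1) 1) (bound := fun _ => M)
    (F := fun s x => ee (-k) x * g (x + s • v)) (F' := fun s x => ee (-k) x * g' (x + s • v))
    (Icc_mem_nhds (by norm_num) (by norm_num))
    (Eventually.of_forall fun s => Continuous.aestronglyMeasurable (by fun_prop))
    (QQ_int (by fun_prop) 0) (Continuous.aestronglyMeasurable (by fun_prop))
    ((ae_restrict_mem (QQ_meas 0)).mono fun x hx s hs => hM (x, s) ⟨QQ_sub 0 hx, hs⟩)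
    (((continuous_const (y := M)).locallyIntegrable.integrableOn_isCompact isCompact_Icc).mono_set (QQ_sub 0))
    (Eventually.of_forall fun x s _ => (hd' x s).ofReal_comp.const_mul _)).2
  have h2 : (fun s : ℝ => ∫ x in QQ (0 : Fin n → ℝ), ee (-k) x * g (x + s • v)) = fun s : ℝ => ee k (s • v) * ∫ x in QQ 0, ee (-k) x * g x := by
    ext s; exact QQ_trans hg hp k _
  have h3 : HasDerivAt (fun s : ℝ => ee k (s • v)) (2 * π * Complex.I * (∑ i, (k i : ℝ) * v i : ℝ)) 0 := by
    have h4 : (fun s : ℝ => ee k (s • v)) = fun s : ℝ => Complex.exp (2 * π * Complex.I * ((s * (∑ i, (k i : ℝ) * v i) : ℝ) : ℂ)) := by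
      ext s; unfold ee; congr 3
      rw [Finset.mul_sum]; refine Finset.sum_congr rfl fun i _ => by simp; ring
    rw [h4]
    have h5 := ((hasDerivAt_id (0:ℝ)).mul_const (∑ i, (k i : ℝ) * v i)).ofReal_comp.const_mul (2 * π * Complex.I) |>.cexp
    refine HasDerivAt.congr_deriv h5 ?_
    simp
  have h4 := h3.mul_const (∫ x in QQ 0, ee (-k) x * g x)
  rw [h2] at h1
  have h5 := h1.unique h4
  rw [← h5]
  simp

theorem trig_of_eig {g : (Fin n → ℝ) → ℝ} {g1 g2 : Fin n → (Fin n → ℝ) → ℝ} (hg : Continuous g) (hp : Per g)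
    (hg1 : ∀ i, Continuous (g1 i)) (hp1 : ∀ i, Per (g1 i)) (hg2 : ∀ i, Continuous (g2 i))
    (hd1 : ∀ i x, HasDerivAt (fun s : ℝ => g (x + s • Pi.single i 1)) (g1 i x) 0)
    (hd2 : ∀ i x, HasDerivAt (fun s : ℝ => g1 i (x + s • Pi.single i 1)) (g2 i x) 0) {lam : ℝ} (hlam : 0 < lam)
    (heq : ∀ x, ∑ i, g2 i x = - lam * g x) :
    (∀ a, ∫ x in QQ a, g x = 0) ∧
    ∃ (S : Finset (Fin n → ℤ)) (c : (Fin n → ℤ) → ℂ), (∀ k ∈ S, 4 * π^2 * ∑ i, (k i : ℝ)^2 = lam) ∧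
      ∀ x, (g x : ℂ) = ∑ k ∈ S, c k * ee k x := by
  have hv : ∀ k : Fin n → ℤ, 4 * π^2 * ∑ i, (k i : ℝ)^2 ≠ lam → ∫ x in QQ 0, ee (-k) x * g x = 0 := by
    intro k hk
    have h1 : ∀ i, ∫ x in QQ 0, ee (-k) x * g2 i x = -(4 * π^2 * (k i)^2) * ∫ x in QQ 0, ee (-k) x * g x := by
      intro i
      rw [QQ_deriv (hg1 i) (hg2 i) (hp1 i) _ (hd2 i) k, QQ_deriv hg (hg1 i) hp _ (hd1 i) k]
      simp only [Pi.single_apply, mul_ite, mul_one, mul_zero, Finset.sum_ite_eq', Finset.mem_univ, if_true]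
      push_cast
      linear_combination (4 * π^2 * (k i)^2 * ∫ x in QQ 0, ee (-k) x * g x) * Complex.I_sq
    have h2 : ∑ i, ∫ x in QQ 0, ee (-k) x * g2 i x = - lam * ∫ x in QQ 0, ee (-k) x * g x := by
      rw [← integral_finsetSum _ fun i _ => QQ_int (by have := ee_cont (-k); have := hg2 i; fun_prop) 0, ← integral_const_mul]
      congr 1; ext x
      rw [← Finset.mul_sum, ← Complex.ofReal_sum, heq]; push_cast; ring
    simp_rw [h1] at h2
    rw [← Finset.sum_mul] at h2
    have h3 : ((lam - 4 * π^2 * ∑ i, (k i : ℝ)^2 : ℝ) : ℂ) * ∫ x in QQ 0, ee (-k) x * g x = 0 := by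
      rw [Finset.sum_neg_distrib, ← Finset.mul_sum] at h2
      push_cast
      linear_combination h2
    rcases mul_eq_zero.1 h3 with h | h
    · exfalso; rw [Complex.ofReal_eq_zero] at h; apply hk; linarith
    · exact h
  constructor
  · intro a
    have h1 := hv 0 (by simpa using hlam.ne)
    rw [← QQ_shift hg hp 0 a] at h1
    have : ∀ x : Fin n → ℝ, ee (-0) x = 1 := by intro x; simp [ee]
    simp_rw [this, one_mul] at h1
    rw [integral_complex_ofReal] at h1
    exact_mod_cast h1
  · obtain ⟨F, hF⟩ := torus_lift hg hp
    have hfin : {k : Fin n → ℤ | 4 * π^2 * ∑ i, (k i : ℝ)^2 = lam}.Finite := by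
      refine (Set.finite_Icc (fun _ : Fin n => -⌊lam⌋) (fun _ => ⌊lam⌋)).subset fun k hk => ?_
      rw [Set.mem_ofPred_eq] at hk
      have h1 : ∀ i, |k i| ≤ ⌊lam⌋ := by
        intro i
        rw [Int.le_floor]
        have h2 : (k i : ℝ)^2 ≤ ∑ i, (k i : ℝ)^2 := Finset.single_le_sum (f := fun i => (k i : ℝ)^2) (fun _ _ => sq_nonneg _) (Finset.mem_univ i)
        have h3 : (|k i| : ℤ) ≤ (k i)^2 := by
          by_cases h0 : k i = 0
          · simp [h0]
          · rw [← sq_abs]; nlinarith [Int.one_le_abs h0]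
        have h4 : ((|k i| : ℤ) : ℝ) ≤ (k i : ℝ)^2 := by exact_mod_cast h3
        have h5 : 1 ≤ 4 * π^2 := by nlinarith [Real.pi_gt_three]
        have h6 : 0 ≤ ∑ i, (k i : ℝ)^2 := by positivity
        nlinarith
      exact ⟨fun i => (abs_le.1 (h1 i)).1, fun i => (abs_le.1 (h1 i)).2⟩
    refine ⟨hfin.toFinset, UnitAddTorus.mFourierCoeff F, fun k hk => by simpa using hk, fun x => ?_⟩
    have h0 : ∀ k ∉ hfin.toFinset, UnitAddTorus.mFourierCoeff F k = 0 := by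
      intro k hk
      rw [QQ_coeff hF k 0]; exact hv k (by simpa using hk)
    have h1 := UnitAddTorus.hasSum_mFourier_series_apply_of_summable (f := F) (summable_of_ne_finset_zero h0) (fun i => (x i : UnitAddCircle))
    rw [hF] at h1
    have h2 := hasSum_sum_of_ne_finset_zero (L := .unconditional _) (s := hfin.toFinset) (f := fun k => UnitAddTorus.mFourierCoeff F k • UnitAddTorus.mFourier k (fun i => (x i : UnitAddCircle))) (fun k hk => by rw [h0 k hk, zero_smul])
    rw [h1.unique h2]
    refine Finset.sum_congr rfl fun k _ => ?_
    rw [mFourier_coe, smul_eq_mul]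

end PartJ


section PartK
set_option linter.unusedSectionVars false
variable {n : ℕ}

theorem K_trig {ψ : EuclideanSpace ℝ (Fin n) → ℝ} {lam : ℝ} (hlam : 0 < lam) (hs : ContDiff ℝ (⊤ : ℕ∞) ψ)
    (hp : ZnPeriodic n ψ) (hl : ∀ x, lap n ψ x = -lam * ψ x) :
    (∀ a, ∫ x in QQ a, ψ (WithLp.toLp 2 x) = 0) ∧
    ∃ (S : Finset (Fin n → ℤ)) (c : (Fin n → ℤ) → ℂ), (∀ k ∈ S, 4 * π^2 * ∑ i, (k i : ℝ)^2 = lam) ∧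
      ∀ x : Fin n → ℝ, (ψ (WithLp.toLp 2 x) : ℂ) = ∑ k ∈ S, c k * ee k x := by
  have hs1 : ∀ i, ContDiff ℝ (⊤ : ℕ∞) (fun y => fderiv ℝ ψ y (EuclideanSpace.single i (1:ℝ))) := by
    intro i
    exact (hs.fderiv_right (m := (⊤ : ℕ∞)) (by simp)).clm_apply contDiff_const
  have hs2 : ∀ i, Continuous (fun x => fderiv ℝ (fun y => fderiv ℝ ψ y (EuclideanSpace.single i (1:ℝ))) x (EuclideanSpace.single i (1:ℝ))) := by
    intro i
    exact (((hs1 i).fderiv_right (m := (⊤ : ℕ∞)) (by simp)).clm_apply contDiff_const).continuous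
  have htl : Continuous (fun x : Fin n → ℝ => (WithLp.toLp 2 x : EuclideanSpace ℝ (Fin n))) := PiLp.continuous_toLp 2 _
  have hd : ∀ (f : EuclideanSpace ℝ (Fin n) → ℝ) (hf : ContDiff ℝ (⊤ : ℕ∞) f) (i : Fin n) (x : Fin n → ℝ),
      HasDerivAt (fun s : ℝ => f (WithLp.toLp 2 (x + s • Pi.single i 1))) (fderiv ℝ f (WithLp.toLp 2 x) (EuclideanSpace.single i (1:ℝ))) 0 := by
    intro f hf i x
    exact ((hf.differentiable (by simp)) (WithLp.toLp 2 x)).hasFDerivAt.hasLineDerivAt (EuclideanSpace.single i (1:ℝ))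
  have hper : ∀ (m : Fin n → ℤ), (fun y => ψ (y + WithLp.toLp 2 (fun i => (m i : ℝ)))) = ψ := by
    intro m; ext y; exact hp y m
  refine trig_of_eig (g := fun x => ψ (WithLp.toLp 2 x))
    (g1 := fun i x => fderiv ℝ ψ (WithLp.toLp 2 x) (EuclideanSpace.single i (1:ℝ)))
    (g2 := fun i x => fderiv ℝ (fun y => fderiv ℝ ψ y (EuclideanSpace.single i (1:ℝ))) (WithLp.toLp 2 x) (EuclideanSpace.single i (1:ℝ)))
    (hs.continuous.comp htl) ?_ (fun i => (hs1 i).continuous.comp htl) ?_ (fun i => (hs2 i).comp htl)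
    (fun i x => hd ψ hs i x) (fun i x => hd _ (hs1 i) i x) hlam (fun x => hl _)
  · intro x m; exact hp (WithLp.toLp 2 x) m
  · intro i x m
    have h1 := fderiv_comp_add_right (𝕜 := ℝ) (f := ψ) (x := WithLp.toLp 2 x) (WithLp.toLp 2 (fun i => (m i : ℝ)))
    rw [hper m] at h1
    show fderiv ℝ ψ _ _ = fderiv ℝ ψ _ _
    rw [h1]; rfl

theorem K_isTrig {ψ : EuclideanSpace ℝ (Fin n) → ℝ} {lam : ℝ} (hlam : 0 < lam) 
    (h : ∃ (S : Finset (Fin n → ℤ)) (c : (Fin n → ℤ) → ℂ), (∀ k ∈ S, 4 * π^2 * ∑ i, (k i : ℝ)^2 = lam) ∧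
      ∀ x : Fin n → ℝ, (ψ (WithLp.toLp 2 x) : ℂ) = ∑ k ∈ S, c k * ee k x) : IsTrig (fun x => ψ ((√lam)⁻¹ • x)) := by
  classical
  obtain ⟨S, c, hS, hc⟩ := h
  have hκ : 0 < √lam := Real.sqrt_pos.2 hlam
  have hπ := Real.pi_pos
  let f : (Fin n → ℤ) → EuclideanSpace ℝ (Fin n) := fun k => WithLp.toLp 2 (fun i => 2 * π * k i / √lam)
  have hf : Function.Injective f := by
    intro k l hkl
    ext i
    have h1 : (f k) i = (f l) i := by rw [hkl]
    have h2 : 2 * π * (k i : ℝ) / √lam = 2 * π * l i / √lam := h1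
    field_simp at h2
    exact_mod_cast h2
  refine ⟨S.image f, Function.extend f c 0, ?_, ?_⟩
  · intro k hk
    obtain ⟨l, hl, rfl⟩ := Finset.mem_image.1 hk
    rw [EuclideanSpace.norm_eq, Real.sqrt_eq_one]
    have : ∀ i, ‖f l i‖^2 = (4 * π^2 * (l i : ℝ)^2) / lam := by
      intro i
      show ‖2 * π * (l i : ℝ) / √lam‖^2 = _
      rw [Real.norm_eq_abs, sq_abs, div_pow, Real.sq_sqrt hlam.le]; ring
    simp_rw [this]
    rw [← Finset.sum_div, ← Finset.mul_sum, hS l hl, div_self hlam.ne']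
  · intro x
    rw [Finset.sum_image (fun a _ b _ h => hf h)]
    have h1 := hc (fun i => (√lam)⁻¹ * x i)
    have h2 : (WithLp.toLp 2 (fun i => (√lam)⁻¹ * x i) : EuclideanSpace ℝ (Fin n)) = (√lam)⁻¹ • x := rfl
    rw [h2] at h1
    rw [h1]
    refine Finset.sum_congr rfl fun k _ => ?_
    rw [hf.extend_apply]
    congr 1
    unfold ee
    have h3 : inner ℝ (f k) x = 2 * π * ∑ i, (k i : ℝ) * ((√lam)⁻¹ * x i) := by
      rw [PiLp.inner_apply, Finset.mul_sum]
      refine Finset.sum_congr rfl fun i _ => ?_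
      show inner ℝ (2 * π * (k i : ℝ) / √lam) (x i) = _
      simp only [RCLike.inner_apply, conj_trivial]
      ring
    rw [h3]; congr 1; push_cast; ring

theorem K_sign {ψ : EuclideanSpace ℝ (Fin n) → ℝ} (hψ : Continuous ψ) {Ω : Set (EuclideanSpace ℝ (Fin n))} (hΩ : IsNodalDomain ψ Ω) :
    IsOpen Ω ∧ Ω.Nonempty ∧ (∀ x, x ∉ Ω → (ψ x = 0 ∨ ∀ᶠ y in nhds x, y ∉ Ω)) ∧ ((∀ x ∈ Ω, 0 < ψ x) ∨ (∀ x ∈ Ω, ψ x < 0)) := by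
  obtain ⟨x₀, hx₀, rfl⟩ := hΩ
  have hop : IsOpen {y | ψ y ≠ 0} := isOpen_ne_fun hψ continuous_const
  refine ⟨hop.connectedComponentIn, ⟨x₀, mem_connectedComponentIn hx₀⟩, ?_, ?_⟩
  · intro x hx
    by_cases h : ψ x = 0
    · exact Or.inl h
    · right
      have hm : x ∈ connectedComponentIn {y | ψ y ≠ 0} x := mem_connectedComponentIn h
      filter_upwards [hop.connectedComponentIn.mem_nhds hm] with y hy hy'
      apply hx
      rw [connectedComponentIn_eq hy', ← connectedComponentIn_eq hy]; exact hm
  · have hpc : IsPreconnected (ψ '' connectedComponentIn {y | ψ y ≠ 0} x₀) :=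
      isPreconnected_connectedComponentIn.image _ hψ.continuousOn
    by_contra hcon
    push Not at hcon
    obtain ⟨⟨x, hx, hx'⟩, y, hy, hy'⟩ := hcon
    have h0 := hpc.ordConnected.out (Set.mem_image_of_mem _ hx) (Set.mem_image_of_mem _ hy) (⟨hx', hy'⟩ : (0:ℝ) ∈ Set.Icc _ _)
    obtain ⟨z, hz, hz'⟩ := h0
    exact connectedComponentIn_subset _ _ hz hz'

theorem K_bdd {ψ : EuclideanSpace ℝ (Fin n) → ℝ} (hψ : Continuous ψ) (h0 : ∀ a, ∫ x in QQ a, ψ (WithLp.toLp 2 x) = 0)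
    {Ω : Set (EuclideanSpace ℝ (Fin n))} (hs : (∀ x ∈ Ω, 0 < ψ x) ∨ (∀ x ∈ Ω, ψ x < 0)) :
    BddAbove {ρ : ℝ | 0 < ρ ∧ ∃ c, Metric.ball c ρ ⊆ Ω} := by
  have htl : Continuous (fun x : Fin n → ℝ => (WithLp.toLp 2 x : EuclideanSpace ℝ (Fin n))) := PiLp.continuous_toLp 2 _
  have key : ∀ f : EuclideanSpace ℝ (Fin n) → ℝ, Continuous f → (∀ x ∈ Ω, 0 < f x) → ∀ a : EuclideanSpace ℝ (Fin n), (∫ x in QQ a.ofLp, f (WithLp.toLp 2 x) = 0) → ∀ ρ, √n < ρ → ¬ ball a ρ ⊆ Ω := by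
    intro f hf hpos a h0 ρ hρ hb
    have hin : ∀ x ∈ QQ a.ofLp, 0 < f (WithLp.toLp 2 x) := by
      intro x hx
      apply hpos; apply hb
      rw [mem_ball, EuclideanSpace.dist_eq]
      refine lt_of_le_of_lt (Real.sqrt_le_sqrt ?_) hρ
      calc ∑ i, dist (x i) (a i) ^ 2 ≤ ∑ i : Fin n, (1:ℝ) := by
            refine Finset.sum_le_sum fun i _ => ?_
            have := hx i
            rw [Set.mem_Ioc] at this
            rw [Real.dist_eq, sq_abs]
            nlinarith [this.1, this.2]
        _ = n := by simp
    have hI : IntegrableOn (fun x : Fin n → ℝ => f (WithLp.toLp 2 x)) (QQ a.ofLp) :=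
      ((hf.comp htl).locallyIntegrable.integrableOn_isCompact isCompact_Icc).mono_set (QQ_sub _)
    have h1 := (setIntegral_pos_iff_support_of_nonneg_ae ((ae_restrict_mem (QQ_meas _)).mono fun x hx => (hin x hx).le) hI).2 (by
      have : (Function.support fun x : Fin n → ℝ => f (WithLp.toLp 2 x)) ∩ QQ a.ofLp = QQ a.ofLp :=
        Set.inter_eq_right.2 fun x hx => (hin x hx).ne'
      rw [this]
      have h2 : QQ a.ofLp = Set.pi Set.univ fun i => Set.Ioc (a i) (a i + 1) := by ext; simp [QQ]
      rw [h2, Real.volume_pi_Ioc]; simp)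
    exact h1.ne' h0
  refine ⟨√n, ?_⟩
  rintro ρ ⟨-, c, hc⟩
  by_contra hlt
  push Not at hlt
  rcases hs with h | h
  · exact key ψ hψ h c (h0 _) ρ hlt hc
  · exact key (fun x => - ψ x) hψ.neg (fun x hx => by linarith [h x hx]) c (by rw [integral_neg, h0, neg_zero]) ρ hlt hc

open scoped Pointwise in
theorem K_scale (ψ : EuclideanSpace ℝ (Fin n) → ℝ) {κ : ℝ} (hκ : 0 < κ) (r : ℝ) (x : EuclideanSpace ℝ (Fin n)) :
    ∫ y in ball x (κ * r), (ψ (κ⁻¹ • y))^2 = κ ^ n * ∫ y in ball (κ⁻¹ • x) r, (ψ y)^2 := by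
  have hfr : Module.finrank ℝ (EuclideanSpace ℝ (Fin n)) = n := by simp
  have hball : κ⁻¹ • ball x (κ * r) = ball (κ⁻¹ • x) r := by
    rw [_root_.smul_ball (inv_ne_zero hκ.ne'), Real.norm_of_nonneg (by positivity), ← mul_assoc, inv_mul_cancel₀ hκ.ne', one_mul]
  have := Measure.setIntegral_comp_smul_of_pos (volume : Measure (EuclideanSpace ℝ (Fin n))) (fun y => (ψ y)^2) (ball x (κ * r)) (inv_pos.2 hκ)
  rw [this, hball, hfr]; simp

end PartK

theorem improved_inner_radius_lower_bound
    (n : ℕ) (hn : 3 ≤ n) (K₁ K₂ : ℝ) (hK₁ : 0 < K₁) (hK₂ : 0 < K₂) :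
    ∃ r₀ a₁ : ℝ, 0 < r₀ ∧ 0 < a₁ ∧
      ∀ (ψ : EuclideanSpace ℝ (Fin n) → ℝ) (lam : ℝ),
        0 < lam → ContDiff ℝ (⊤ : ℕ∞) ψ → ZnPeriodic n ψ →
        (∀ x, lap n ψ x = -lam * ψ x) →
        lam ^ (-(1:ℝ)/2) < r₀ →
        ∀ r : ℝ, lam ^ (-(1:ℝ)/2) ≤ r → r ≤ r₀ →
        (∀ x : EuclideanSpace ℝ (Fin n),
          K₁ * r ^ n ≤ (∫ y in Metric.ball x r, (ψ y)^2) ∧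
          (∫ y in Metric.ball x r, (ψ y)^2) ≤ K₂ * r ^ n) →
        ∀ Ω, IsNodalDomain ψ Ω →
          a₁ * r ^ (-(((n:ℝ)-1)*((n:ℝ)-2))/(2*(n:ℝ))) *
            lam ^ (-(1:ℝ)/2 - ((n:ℝ)-1)*((n:ℝ)-2)/(4*(n:ℝ))) ≤ innerRadius Ω := by
  have hfr : Module.finrank ℝ (EuclideanSpace ℝ (Fin n)) = n := by simp
  obtain ⟨a, ha, hstep⟩ := global_step (EuclideanSpace ℝ (Fin n)) (by rw [hfr]; exact hn)
    (e := EuclideanSpace.single (⟨0, by omega⟩ : Fin n) (1:ℝ)) (by simp) n hK₁ hK₂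
  rw [hfr] at hstep
  refine ⟨1, a, one_pos, ha, ?_⟩
  intro ψ lam hlam hs hp hl _ r hr _ hK Ω hΩ
  obtain ⟨h0, htr⟩ := K_trig hlam hs hp hl
  have hT := K_isTrig hlam htr
  obtain ⟨hop, hne, hbd, hsg⟩ := K_sign hs.continuous hΩ
  have hB := K_bdd hs.continuous h0 hsg
  have hκ : 0 < √lam := Real.sqrt_pos.2 hlam
  have hκ' : lam ^ (-(1:ℝ)/2) = (√lam)⁻¹ := by
    rw [Real.sqrt_eq_rpow, ← Real.rpow_neg hlam.le]; congr 1; ring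
  rw [hκ'] at hr
  have hr0 : 0 < r := lt_of_lt_of_le (by positivity) hr
  have hβ : 1 ≤ √lam * r := by
    have := mul_le_mul_of_nonneg_left hr hκ.le
    rwa [mul_inv_cancel₀ hκ.ne'] at this
  have hint := fun x => K_scale ψ hκ r x
  have hcont : Continuous fun x : EuclideanSpace ℝ (Fin n) => (√lam)⁻¹ • x := continuous_const_smul _
  obtain ⟨y, hy⟩ := hstep (√lam * r) (fun x => ψ ((√lam)⁻¹ • x)) hβ hT (by
      intro x
      have := hK ((√lam)⁻¹ • x)
      rw [hint x, mul_pow]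
      have hk : 0 < √lam ^ n := by positivity
      constructor
      · nlinarith [mul_le_mul_of_nonneg_left this.1 hk.le]
      · nlinarith [mul_le_mul_of_nonneg_left this.2 hk.le])
    ((fun x : EuclideanSpace ℝ (Fin n) => (√lam)⁻¹ • x) ⁻¹' Ω) (hop.preimage hcont)
    (by
      obtain ⟨z, hz⟩ := hne
      exact ⟨√lam • z, by simpa [smul_smul, inv_mul_cancel₀ hκ.ne'] using hz⟩)
    (by
      intro x hx
      rcases hbd _ hx with h | h
      · exact Or.inl h
      · exact Or.inr (hcont.continuousAt.eventually h))
    (by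
      rcases hsg with h | h
      · exact Or.inl fun x hx => h _ hx
      · exact Or.inr fun x hx => h _ hx)
  refine le_csSup hB ⟨by positivity, (√lam)⁻¹ • y, ?_⟩
  set s : ℝ := -(((n:ℝ)-1)*((n:ℝ)-2))/(2*(n:ℝ)) with hsdef
  have hn0 : (n:ℝ) ≠ 0 := by positivity
  have hrad : a * r ^ s * lam ^ (-(1:ℝ)/2 - ((n:ℝ)-1)*((n:ℝ)-2)/(4*(n:ℝ))) = (√lam)⁻¹ * (a * (√lam * r) ^ s) := by
    have e1 : -(1:ℝ)/2 - ((n:ℝ)-1)*((n:ℝ)-2)/(4*(n:ℝ)) = -(1:ℝ)/2 + 1/2 * s := by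
      rw [hsdef]; field_simp; ring
    rw [e1, Real.rpow_add hlam, hκ', Real.rpow_mul hlam.le, ← Real.sqrt_eq_rpow, Real.mul_rpow hκ.le hr0.le]
    ring
  rw [hrad]
  intro z hz
  have h1 : √lam • z ∈ ball y (a * (√lam * r) ^ s) := by
    rw [mem_ball, dist_eq_norm] at hz ⊢
    have e : √lam • z - y = √lam • (z - (√lam)⁻¹ • y) := by
      rw [smul_sub, smul_smul, mul_inv_cancel₀ hκ.ne', one_smul]
    rw [e, norm_smul, Real.norm_of_nonneg hκ.le]
    have := mul_lt_mul_of_pos_left hz hκ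
    rwa [← mul_assoc, mul_inv_cancel₀ hκ.ne', one_mul] at this
  have h2 := hy h1
  simpa [smul_smul, inv_mul_cancel₀ hκ.ne'] using h2
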